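/- If a tuple (R, R_0, Δ, Π) is achievable with respect to the strong perceptual constraint by a sequence of codes for which the reconstruction Y^n = g_n(f_n(X^n,Z^n,K),Z^n,K) and the side information Z^n form jointly i.i.d. sequences (i.e., the pairs (Y_i,Z_i), i = 1,…,n, are i.i.d.), then (R, R_0, Δ, Π) lies in the closure of R^{(s)} := ∪_{γ>0}(R_γ^{(s)-} ∪ R_γ^{(s)+}). -/

import Mathlib

open scoped BigOperators
open Finset Filter

noncomputable section

/-- A probability mass function on a finite type. -/
def IsPMF {α : Type*} [Fintype α] (p : α → ℝ) : Prop :=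
  (∀ x, 0 ≤ p x) ∧ ∑ x, p x = 1

/-- Total variation distance `sup_A |P(A) - Q(A)|` between two distributions on a finite type. -/
noncomputable def dTV {α : Type*} [Fintype α] (p q : α → ℝ) : ℝ :=
  ⨆ A : Finset α, |∑ x ∈ A, p x - ∑ x ∈ A, q x|

/-- The i.i.d. (product) distribution on `n`-sequences. -/
noncomputable def prodDist {α : Type*} [Fintype α] (n : ℕ) (p : α → ℝ) :
    (Fin n → α) → ℝ :=
  fun xs => ∏ i, p (xs i)

/-- Empirical distribution (type) of a sequence. -/
noncomputable def emp {α : Type*} [Fintype α] [DecidableEq α] {n : ℕ}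
    (xs : Fin n → α) : α → ℝ :=
  fun x => (1 / (n : ℝ)) * ∑ i, if xs i = x then (1 : ℝ) else 0

/-- Law (pushforward distribution) of a random variable on a finite probability space
with pmf `μ`. -/
noncomputable def law {Ω α : Type*} [Fintype Ω] [DecidableEq α]
    (μ : Ω → ℝ) (f : Ω → α) : α → ℝ :=
  fun a => ∑ ω, if f ω = a then μ ω else 0

/-- Shannon entropy (in nats). -/
noncomputable def entropy {α : Type*} [Fintype α] (p : α → ℝ) : ℝ :=
  -∑ x, p x * Real.log (p x)

/-- Shannon conditional mutual information `I(X;Y|Z)` of a joint pmf on `X × Y × Z`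
(the third coordinate is the conditioning variable). -/
noncomputable def condMI {X Y Z : Type*} [Fintype X] [Fintype Y] [Fintype Z]
    (p : X × Y × Z → ℝ) : ℝ :=
  ∑ x : X, ∑ y : Y, ∑ z : Z,
    p (x, y, z) *
      Real.log
        (p (x, y, z) * (∑ x' : X, ∑ y' : Y, p (x', y', z)) /
          ((∑ y' : Y, p (x, y', z)) * (∑ x' : X, p (x', y, z))))



section RDP

variable {X Z : Type*} [Fintype X] [Fintype Z]

/-- `(X,Z)`-marginal of a joint pmf on `X × Y × Z`. -/
noncomputable def margXZ3 {Y : Type*} [Fintype Y] (q : X × Y × Z → ℝ) : X × Z → ℝ :=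
  fun p => ∑ y, q (p.1, y, p.2)

/-- `X`-marginal of a joint pmf on `X × Y × Z`. -/
noncomputable def margX3 {Y : Type*} [Fintype Y] (q : X × Y × Z → ℝ) : X → ℝ :=
  fun x => ∑ y, ∑ z, q (x, y, z)

/-- `Y`-marginal of a joint pmf on `X × Y × Z`. -/
noncomputable def margY3 {Y : Type*} [Fintype Y] (q : X × Y × Z → ℝ) : Y → ℝ :=
  fun y => ∑ x, ∑ z, q (x, y, z)

/-- Expected per-letter distortion `E[D(X,Y)]` under a joint pmf on `X × Y × Z`. -/
noncomputable def expD3 (q : X × X × Z → ℝ) (D : X → X → ℝ) : ℝ :=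
  ∑ x, ∑ y, ∑ z, q (x, y, z) * D x y

/-- `limsup_{n→∞} d_TV(∏_{i=1}^n P, ∏_{i=1}^n Q)`. -/
noncomputable def limsupTV {α : Type*} [Fintype α] (p q : α → ℝ) : ℝ :=
  Filter.limsup (fun n => dTV (prodDist n p) (prodDist n q)) Filter.atTop

/-- The conditional rate-distortion function
`R(Δ) = inf { I(X;Y|Z) : P_{Y|XZ}, E[D(X,Y)] ≤ Δ }`. -/
noncomputable def Rdist (pXZ : X × Z → ℝ) (D : X → X → ℝ) (Δ : ℝ) : ℝ :=
  sInf {r | ∃ q : X × X × Z → ℝ,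
    IsPMF q ∧ margXZ3 q = pXZ ∧ expD3 q D ≤ Δ ∧ r = condMI q}

/-- `g(R,Δ)`. -/
noncomputable def gFun (pXZ : X × Z → ℝ) (D : X → X → ℝ) (R Δ : ℝ) : ℝ :=
  sInf {v | ∃ q : X × X × Z → ℝ,
    IsPMF q ∧ margXZ3 q = pXZ ∧ condMI q ≤ R ∧ expD3 q D ≤ Δ ∧
      v = limsupTV (margX3 q) (margY3 q)}

/-- `f(Δ) = g(R(Δ),Δ)`. -/
noncomputable def fFun (pXZ : X × Z → ℝ) (D : X → X → ℝ) (Δ : ℝ) : ℝ :=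
  gFun pXZ D (Rdist pXZ D Δ) Δ

/-- The region `R_γ^{(e)}` (tuples `(R, R₀, Δ, Π)`). -/
def RegionE (pXZ : X × Z → ℝ) (D : X → X → ℝ) (γ : ℝ) : Set (ℝ × ℝ × ℝ × ℝ) :=
  {t | ∃ q : X × X × Z → ℝ, IsPMF q ∧ margXZ3 q = pXZ ∧
    0 ≤ t.2.1 ∧ condMI q + γ ≤ t.1 ∧ expD3 q D ≤ t.2.2.1 ∧
    dTV (margX3 q) (margY3 q) ≤ t.2.2.2}

/-- The region `R_γ^{(s)+}` (tuples `(R, R₀, Δ, Π)`). -/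
def RegionSplus (pXZ : X × Z → ℝ) (D : X → X → ℝ) (γ : ℝ) : Set (ℝ × ℝ × ℝ × ℝ) :=
  {t | ∃ q : X × X × Z → ℝ, IsPMF q ∧ margXZ3 q = pXZ ∧
    fFun pXZ D t.2.2.1 ≤ t.2.2.2 ∧ 0 ≤ t.2.1 ∧
    condMI q + γ ≤ t.1 ∧ expD3 q D ≤ t.2.2.1}

/-- Witness conditions for membership in `R_γ^{(s)-}` with auxiliary alphabet `U` and
joint pmf `q` on `X × Y × U × Z` (with `Y = X` the reconstruction alphabet). -/
def SminusWitness (pXZ : X × Z → ℝ) (D : X → X → ℝ) (γ : ℝ)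
    (R R0 Δ Pc : ℝ) (U : Type*) [Fintype U] (q : X × X × U × Z → ℝ) : Prop :=
  IsPMF q ∧
  (∀ x z, (∑ y, ∑ u, q (x, y, u, z)) = pXZ (x, z)) ∧
  -- conditional independence X ⟂ Y | (U,Z)
  (∀ x y u z, (∑ x', ∑ y', q (x', y', u, z)) * q (x, y, u, z) =
      (∑ y', q (x, y', u, z)) * (∑ x', q (x', y, u, z))) ∧
  Pc < fFun pXZ D Δ ∧ 0 < R0 ∧
  -- R ≥ I(X;U|Z) + γ
  condMI (fun p : X × U × Z => ∑ y, q (p.1, y, p.2.1, p.2.2)) + γ ≤ R ∧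
  -- R + R₀ ≥ I(Y;U|Z) + γ
  condMI (fun p : X × U × Z => ∑ x, q (x, p.1, p.2.1, p.2.2)) + γ ≤ R + R0 ∧
  (∑ x, ∑ y, ∑ u, ∑ z, q (x, y, u, z) * D x y) ≤ Δ ∧
  limsupTV (fun x => ∑ y, ∑ u, ∑ z, q (x, y, u, z))
    (fun y => ∑ x, ∑ u, ∑ z, q (x, y, u, z)) ≤ Pc

/-- The region `R_γ^{(s)-}` (tuples `(R, R₀, Δ, Π)`). -/
def RegionSminus (pXZ : X × Z → ℝ) (D : X → X → ℝ) (γ : ℝ) : Set (ℝ × ℝ × ℝ × ℝ) :=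
  {t | ∃ (U : Type) (inst : Fintype U) (q : X × X × U × Z → ℝ),
    @SminusWitness X Z _ _ pXZ D γ t.1 t.2.1 t.2.2.1 t.2.2.2 U inst q}

end RDP

section Codes

variable {X Z : Type*} [Fintype X] [Fintype Z]

/-- Joint distribution of `(X^n, Z^n, K, M, Y^n)` induced by an i.i.d. source `pXZ`,
common randomness `K` uniform on `Fin N0`, a stochastic encoder `enc` and a
stochastic decoder `dec`. -/
noncomputable def codeJoint {n N N0 : ℕ} (pXZ : X × Z → ℝ)
    (enc : (Fin n → X) → (Fin n → Z) → Fin N0 → Fin N → ℝ)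
    (dec : Fin N → (Fin n → Z) → Fin N0 → (Fin n → X) → ℝ) :
    (Fin n → X) × (Fin n → Z) × Fin N0 × Fin N × (Fin n → X) → ℝ :=
  fun w =>
    (∏ i, pXZ (w.1 i, w.2.1 i)) * (1 / (N0 : ℝ)) *
      enc w.1 w.2.1 w.2.2.1 w.2.2.2.1 * dec w.2.2.2.1 w.2.1 w.2.2.1 w.2.2.2.2

/-- Distribution of the reconstruction `Y^n` induced by a code. -/
noncomputable def codeOutY {n N N0 : ℕ} (pXZ : X × Z → ℝ)
    (enc : (Fin n → X) → (Fin n → Z) → Fin N0 → Fin N → ℝ)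
    (dec : Fin N → (Fin n → Z) → Fin N0 → (Fin n → X) → ℝ) :
    (Fin n → X) → ℝ :=
  fun ys => ∑ xs : Fin n → X, ∑ zs : Fin n → Z, ∑ k : Fin N0, ∑ m : Fin N,
    codeJoint pXZ enc dec (xs, zs, k, m, ys)

/-- Joint distribution of `(Y^n, Z^n)` induced by a code. -/
noncomputable def codeYZ {n N N0 : ℕ} (pXZ : X × Z → ℝ)
    (enc : (Fin n → X) → (Fin n → Z) → Fin N0 → Fin N → ℝ)
    (dec : Fin N → (Fin n → Z) → Fin N0 → (Fin n → X) → ℝ) :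
    (Fin n → X) × (Fin n → Z) → ℝ :=
  fun p => ∑ xs : Fin n → X, ∑ k : Fin N0, ∑ m : Fin N,
    codeJoint pXZ enc dec (xs, p.2, k, m, p.1)

/-- Expected average distortion `E[D(X^n,Y^n)]` of a code. -/
noncomputable def codeExpDist {n N N0 : ℕ} (pXZ : X × Z → ℝ)
    (enc : (Fin n → X) → (Fin n → Z) → Fin N0 → Fin N → ℝ)
    (dec : Fin N → (Fin n → Z) → Fin N0 → (Fin n → X) → ℝ)
    (D : X → X → ℝ) : ℝ :=
  ∑ w : (Fin n → X) × (Fin n → Z) × Fin N0 × Fin N × (Fin n → X),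
    codeJoint pXZ enc dec w * ((1 / (n : ℝ)) * ∑ i, D (w.1 i) (w.2.2.2.2 i))

/-- Expected total variation between the empirical distributions of source and
reconstruction, `E[d_TV(P̂_{X^n}, P̂_{Y^n})]`. -/
noncomputable def codeExpEmpTV [DecidableEq X] {n N N0 : ℕ} (pXZ : X × Z → ℝ)
    (enc : (Fin n → X) → (Fin n → Z) → Fin N0 → Fin N → ℝ)
    (dec : Fin N → (Fin n → Z) → Fin N0 → (Fin n → X) → ℝ) : ℝ :=
  ∑ w : (Fin n → X) × (Fin n → Z) × Fin N0 × Fin N × (Fin n → X),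
    codeJoint pXZ enc dec w * dTV (emp w.1) (emp w.2.2.2.2)

/-- `(R, R₀, Δ, Π)` is achievable with respect to the strong perceptual constraint. -/
def AchievableStrong (pXZ : X × Z → ℝ) (D : X → X → ℝ) (R R0 Δ Pc : ℝ) : Prop :=
  ∀ ε > (0 : ℝ), ∃ n₀ : ℕ, ∀ n ≥ n₀,
    ∃ (enc : (Fin n → X) → (Fin n → Z) → Fin ⌊(2 : ℝ) ^ ((n : ℝ) * (R0 + ε))⌋₊ →
          Fin ⌊(2 : ℝ) ^ ((n : ℝ) * (R + ε))⌋₊ → ℝ)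
      (dec : Fin ⌊(2 : ℝ) ^ ((n : ℝ) * (R + ε))⌋₊ → (Fin n → Z) →
          Fin ⌊(2 : ℝ) ^ ((n : ℝ) * (R0 + ε))⌋₊ → (Fin n → X) → ℝ),
      (∀ xs zs k, IsPMF (enc xs zs k)) ∧ (∀ m zs k, IsPMF (dec m zs k)) ∧
      codeExpDist pXZ enc dec D ≤ Δ + ε ∧
      dTV (prodDist n (fun x => ∑ z, pXZ (x, z))) (codeOutY pXZ enc dec) ≤ Pc + ε

/-- `(R, R₀, Δ, Π)` is achievable with respect to the empirical perceptual constraint. -/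
def AchievableEmp [DecidableEq X] (pXZ : X × Z → ℝ) (D : X → X → ℝ)
    (R R0 Δ Pc : ℝ) : Prop :=
  ∀ ε > (0 : ℝ), ∃ n₀ : ℕ, ∀ n ≥ n₀,
    ∃ (enc : (Fin n → X) → (Fin n → Z) → Fin ⌊(2 : ℝ) ^ ((n : ℝ) * (R0 + ε))⌋₊ →
          Fin ⌊(2 : ℝ) ^ ((n : ℝ) * (R + ε))⌋₊ → ℝ)
      (dec : Fin ⌊(2 : ℝ) ^ ((n : ℝ) * (R + ε))⌋₊ → (Fin n → Z) →
          Fin ⌊(2 : ℝ) ^ ((n : ℝ) * (R0 + ε))⌋₊ → (Fin n → X) → ℝ),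
      (∀ xs zs k, IsPMF (enc xs zs k)) ∧ (∀ m zs k, IsPMF (dec m zs k)) ∧
      codeExpDist pXZ enc dec D ≤ Δ + ε ∧
      codeExpEmpTV pXZ enc dec ≤ Pc + ε

/-- `(R, R₀, Δ, Π)` is achievable with respect to the strong perceptual constraint by
codes whose reconstruction `Y^n` together with the side information `Z^n` forms a
jointly i.i.d. sequence. -/
def AchievableStrongIID (pXZ : X × Z → ℝ) (D : X → X → ℝ) (R R0 Δ Pc : ℝ) : Prop :=
  ∀ ε > (0 : ℝ), ∃ n₀ : ℕ, ∀ n ≥ n₀,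
    ∃ (enc : (Fin n → X) → (Fin n → Z) → Fin ⌊(2 : ℝ) ^ ((n : ℝ) * (R0 + ε))⌋₊ →
          Fin ⌊(2 : ℝ) ^ ((n : ℝ) * (R + ε))⌋₊ → ℝ)
      (dec : Fin ⌊(2 : ℝ) ^ ((n : ℝ) * (R + ε))⌋₊ → (Fin n → Z) →
          Fin ⌊(2 : ℝ) ^ ((n : ℝ) * (R0 + ε))⌋₊ → (Fin n → X) → ℝ),
      (∀ xs zs k, IsPMF (enc xs zs k)) ∧ (∀ m zs k, IsPMF (dec m zs k)) ∧
      codeExpDist pXZ enc dec D ≤ Δ + ε ∧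
      dTV (prodDist n (fun x => ∑ z, pXZ (x, z))) (codeOutY pXZ enc dec) ≤ Pc + ε ∧
      (∃ r : X × Z → ℝ, IsPMF r ∧
        ∀ ys zs, codeYZ pXZ enc dec (ys, zs) = ∏ i, r (ys i, zs i))

end Codes

/-!
A code is a scheme: a law of `(Xⁿ, W, Zⁿ)`, where `W` is the message together with the common
randomness, followed by a decoding channel from `(W, Zⁿ)` to `Yⁿ`. As the common randomness is
independent of the source, `I(Xⁿ;W|Zⁿ)` is at most the log of the number of messages, while
`I(Yⁿ;W|Zⁿ)` is at most the log of the number of values of `W`. Since both `(Xⁿ, Zⁿ)` and `(Yⁿ, Zⁿ)`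
are i.i.d., replacing the sequences by their letters at a uniform time `I`, with auxiliary variable
`U = (I, W, Zⁿ)`, divides both informations by at least `n`, keeps the distortion, and leaves the
laws of `(X, Z)` and of one letter `Y` as they were.

If `f(Δ) ≤ Π` this single-letter scheme already lies in the region `R^{(s)+}`. Otherwise
`Π < f(Δ) ≤ 1`. The Bhattacharyya coefficient of `n`-fold product laws decays exponentially unless
the factors agree, so a total variation bounded away from `1` for all large `n` forces the letter
law of the reconstruction to approach that of the source. A maximal coupling then moves the
reconstruction to exactly the source law, at vanishing cost in distortion and, by data processing,
without increasing `I(Y;U|Z)`; its perceptual distance is then `0`, which gives `R^{(s)-}`.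
-/

section LogSum

variable {ι : Type*} [Fintype ι] {x y : ι → ℝ}

lemma sum_mul_log_sum_div_sum_le (hx : ∀ i, 0 ≤ x i) (hy : ∀ i, 0 ≤ y i)
    (hxy : ∀ i, y i = 0 → x i = 0) :
    (∑ i, x i) * Real.log ((∑ i, x i) / ∑ i, y i) ≤ ∑ i, x i * Real.log (x i / y i) := by
  set c := (∑ i, x i) / ∑ i, y i
  have pointwise : ∀ i, x i * Real.log c ≤ x i * Real.log (x i / y i) + (y i * c - x i) := by
    intro i
    rcases (hx i).eq_or_lt with h0 | hxi
    · simpa [← h0] using mul_nonneg (hy i) (div_nonneg (sum_nonneg' hx) (sum_nonneg' hy))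
    have hyi : 0 < y i := (hy i).lt_of_ne' fun h => hxi.ne' (hxy i h)
    have hc0 : 0 < c := div_pos (hxi.trans_le (single_le_sum (fun j _ => hx j) (mem_univ i)))
      (hyi.trans_le (single_le_sum (fun j _ => hy j) (mem_univ i)))
    have hlog : Real.log c - Real.log (x i / y i) ≤ c / (x i / y i) - 1 := by
      rw [← Real.log_div hc0.ne' (div_pos hxi hyi).ne']
      exact Real.log_le_sub_one_of_pos (by positivity)
    have hmul : x i * (c / (x i / y i) - 1) = y i * c - x i := by field_simp
    linarith [mul_le_mul_of_nonneg_left hlog hxi.le]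
  have htotal : (∑ i, y i) * c = ∑ i, x i :=
    mul_div_cancel_of_imp' fun h => sum_eq_zero fun i _ =>
      hxy i ((sum_eq_zero_iff_of_nonneg fun j _ => hy j).1 h i (mem_univ i))
  calc (∑ i, x i) * Real.log c
      ≤ ∑ i, (x i * Real.log (x i / y i) + (y i * c - x i)) := by
        rw [sum_mul]
        exact sum_le_sum fun i _ => pointwise i
    _ = ∑ i, x i * Real.log (x i / y i) := by
        rw [sum_add_distrib, sum_sub_distrib, ← sum_mul, htotal, sub_self, add_zero]

lemma sum_mul_log_div_nonneg (hx : ∀ i, 0 ≤ x i) (hy : ∀ i, 0 ≤ y i)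
    (hxy : ∀ i, y i = 0 → x i = 0) (hle : ∑ i, y i ≤ ∑ i, x i) :
    0 ≤ ∑ i, x i * Real.log (x i / y i) := by
  refine le_trans (mul_nonneg (sum_nonneg' hx) ?_) (sum_mul_log_sum_div_sum_le hx hy hxy)
  have hsum : 0 ≤ ∑ i, y i := sum_nonneg' hy
  rcases hsum.eq_or_lt with h0 | hpos
  · simp [← h0]
  · exact Real.log_nonneg ((one_le_div hpos).2 hle)

end LogSum

section Law

variable {Ω α : Type*} [Fintype Ω] [DecidableEq α] {μ : Ω → ℝ}

lemma law_nonneg (hμ : ∀ ω, 0 ≤ μ ω) (f : Ω → α) (a : α) : 0 ≤ law μ f a :=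
  sum_nonneg fun ω _ => by split_ifs <;> simp [hμ]

lemma le_law_apply (hμ : ∀ ω, 0 ≤ μ ω) (f : Ω → α) (ω : Ω) : μ ω ≤ law μ f (f ω) := by
  simpa [law] using single_le_sum (f := fun ω' => if f ω' = f ω then μ ω' else 0)
    (fun ω' _ => by split_ifs <;> simp [hμ]) (mem_univ ω)

lemma sum_law_mul [Fintype α] (μ : Ω → ℝ) (f : Ω → α) (g : α → ℝ) :
    ∑ a, law μ f a * g a = ∑ ω, μ ω * g (f ω) := by
  simp only [law, sum_mul, ite_mul, zero_mul]
  rw [sum_comm]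
  simp

lemma sum_law [Fintype α] (μ : Ω → ℝ) (f : Ω → α) : ∑ a, law μ f a = ∑ ω, μ ω := by
  simpa using sum_law_mul μ f fun _ => 1

lemma IsPMF.law [Fintype α] (hμ : IsPMF μ) (f : Ω → α) : IsPMF (law μ f) :=
  ⟨law_nonneg hμ.1 f, (sum_law μ f).trans hμ.2⟩

end Law

section Product

variable {ι α A Z : Type*} [Fintype α] [Fintype A] [Fintype Z]

lemma sum_pi_prod [Fintype ι] [DecidableEq ι] (g : ι → α → ℝ) :
    ∑ xs : ι → α, ∏ i, g i (xs i) = ∏ i, ∑ a, g i a := by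
  simpa using sum_prod_piFinset univ g

lemma IsPMF.prodDist {p : α → ℝ} (hp : IsPMF p) (n : ℕ) : IsPMF (prodDist n p) :=
  ⟨fun _ => prod_nonneg fun _ _ => hp.1 _, by simp [_root_.prodDist, sum_pi_prod, hp.2]⟩

lemma law_prodDist_apply [DecidableEq α] {p : α → ℝ} (hp : IsPMF p) {n : ℕ} (i : Fin n) :
    law (prodDist n p) (fun xs => xs i) = p := by
  funext a
  have hfactor : ∀ xs : Fin n → α, (if xs i = a then prodDist n p xs else 0) =
      ∏ j, p (xs j) * if j = i then (if xs j = a then 1 else 0) else 1 := fun xs => by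
    rw [prod_mul_distrib, prod_ite_eq' univ i]
    simp [prodDist]
  simp only [law, hfactor]
  rw [sum_pi_prod fun j b => p b * if j = i then (if b = a then 1 else 0) else 1,
    prod_eq_single i (fun j _ hj => by simp [hj, hp.2]) (by simp)]
  simp

/-- The law of `n` i.i.d. pairs with law `r`, as a law on pairs of `n`-sequences. -/
def pairProd (n : ℕ) (r : A × Z → ℝ) : (Fin n → A) × (Fin n → Z) → ℝ :=
  fun w => prodDist n r fun i => (w.1 i, w.2 i)

lemma sum_pairProd_mul (n : ℕ) (r : A × Z → ℝ) (g : (Fin n → A × Z) → ℝ) :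
    ∑ w : (Fin n → A) × (Fin n → Z), pairProd n r w * g (fun i => (w.1 i, w.2 i)) =
      ∑ v, prodDist n r v * g v :=
  (Equiv.arrowProdEquivProdArrow (Fin n) (fun _ => A) fun _ => Z).symm.sum_comp
    fun v => prodDist n r v * g v

lemma pairProd_nonneg {n : ℕ} {r : A × Z → ℝ} (hr : ∀ v, 0 ≤ r v)
    (w : (Fin n → A) × (Fin n → Z)) : 0 ≤ pairProd n r w := by
  rw [pairProd, prodDist]
  exact prod_nonneg fun _ _ => hr _

lemma IsPMF.pairProd {r : A × Z → ℝ} (hr : IsPMF r) (n : ℕ) : IsPMF (pairProd n r) :=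
  ⟨pairProd_nonneg hr.1, by simpa [(hr.prodDist n).2] using sum_pairProd_mul n r fun _ => 1⟩

lemma law_pairProd_apply [DecidableEq A] [DecidableEq Z] {r : A × Z → ℝ} (hr : IsPMF r)
    {n : ℕ} (i : Fin n) : law (pairProd n r) (fun w => (w.1 i, w.2 i)) = r := by
  refine Eq.trans (funext fun v => ?_) (law_prodDist_apply hr i)
  simpa [law] using sum_pairProd_mul n r fun xs => if xs i = v then 1 else 0

lemma sum_pairProd_left {n : ℕ} (r : A × Z → ℝ) (zs : Fin n → Z) :
    ∑ as, pairProd n r (as, zs) = ∏ i, ∑ a, r (a, zs i) :=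
  sum_pi_prod fun i a => r (a, zs i)

lemma sum_pairProd_right {n : ℕ} (r : A × Z → ℝ) (as : Fin n → A) :
    ∑ zs, pairProd n r (as, zs) = prodDist n (fun a => ∑ z, r (a, z)) as :=
  sum_pi_prod fun i z => r (as i, z)

lemma IsPMF.sum_right {r : A × Z → ℝ} (hr : IsPMF r) : IsPMF fun a => ∑ z, r (a, z) :=
  ⟨fun _ => sum_nonneg fun _ _ => hr.1 _, by rw [← hr.2, Fintype.sum_prod_type]⟩

end Product

section Marginals

variable {A B C : Type*} {p : A × B × C → ℝ}

/-- Marginal of a joint law on the last two coordinates. -/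
def margYZ3 [Fintype A] (p : A × B × C → ℝ) : B × C → ℝ :=
  fun w => ∑ a, p (a, w)

/-- Marginal of a joint law on the last coordinate, the conditioning variable of `condMI`. -/
def margZ3 [Fintype A] [Fintype B] (p : A × B × C → ℝ) : C → ℝ :=
  fun c => ∑ a, ∑ b, p (a, b, c)

lemma margZ3_eq_sum_margXZ3 [Fintype A] [Fintype B] (p : A × B × C → ℝ) (c : C) :
    margZ3 p c = ∑ a, margXZ3 p (a, c) :=
  rfl

lemma margZ3_eq_sum_margYZ3 [Fintype A] [Fintype B] (p : A × B × C → ℝ) (c : C) :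
    margZ3 p c = ∑ b, margYZ3 p (b, c) :=
  sum_comm

lemma margX3_eq_sum_margXZ3 [Fintype B] [Fintype C] (p : A × B × C → ℝ) (a : A) :
    margX3 p a = ∑ c, margXZ3 p (a, c) :=
  sum_comm

lemma sum_margXZ3_mul [Fintype A] [Fintype B] [Fintype C] (p : A × B × C → ℝ) (g : A × C → ℝ) :
    ∑ v, margXZ3 p v * g v = ∑ w, p w * g (w.1, w.2.2) := by
  simp only [Fintype.sum_prod_type, margXZ3, sum_mul]
  exact sum_congr rfl fun a _ => sum_comm

lemma sum_margYZ3_mul [Fintype A] [Fintype B] [Fintype C] (p : A × B × C → ℝ) (g : B × C → ℝ) :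
    ∑ v, margYZ3 p v * g v = ∑ w, p w * g w.2 := by
  rw [Fintype.sum_prod_type_right (α₁ := A)]
  simp only [margYZ3, sum_mul]

lemma sum_margXZ3 [Fintype A] [Fintype B] [Fintype C] (p : A × B × C → ℝ) :
    ∑ v, margXZ3 p v = ∑ w, p w := by
  simpa using sum_margXZ3_mul p fun _ => 1

lemma margXZ3_nonneg [Fintype B] (hp : ∀ w, 0 ≤ p w) (v : A × C) : 0 ≤ margXZ3 p v :=
  sum_nonneg fun _ _ => hp _

lemma margYZ3_nonneg [Fintype A] (hp : ∀ w, 0 ≤ p w) (v : B × C) : 0 ≤ margYZ3 p v :=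
  sum_nonneg fun _ _ => hp _

lemma margZ3_nonneg [Fintype A] [Fintype B] (hp : ∀ w, 0 ≤ p w) (c : C) : 0 ≤ margZ3 p c :=
  sum_nonneg fun _ _ => sum_nonneg fun _ _ => hp _

lemma le_margXZ3 [Fintype B] (hp : ∀ w, 0 ≤ p w) (w : A × B × C) : p w ≤ margXZ3 p (w.1, w.2.2) :=
  single_le_sum (f := fun b => p (w.1, b, w.2.2)) (fun _ _ => hp _) (mem_univ w.2.1)

lemma le_margYZ3 [Fintype A] (hp : ∀ w, 0 ≤ p w) (w : A × B × C) : p w ≤ margYZ3 p w.2 :=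
  single_le_sum (f := fun a => p (a, w.2)) (fun _ _ => hp _) (mem_univ w.1)

lemma le_margZ3 [Fintype A] [Fintype B] (hp : ∀ w, 0 ≤ p w) (w : A × B × C) :
    p w ≤ margZ3 p w.2.2 :=
  (le_margXZ3 hp w).trans <| single_le_sum (f := fun a => margXZ3 p (a, w.2.2))
    (fun _ _ => margXZ3_nonneg hp _) (mem_univ w.1)

lemma IsPMF.margX3 [Fintype A] [Fintype B] [Fintype C] (hp : IsPMF p) : IsPMF (margX3 p) :=
  ⟨fun _ => sum_nonneg fun _ _ => sum_nonneg fun _ _ => hp.1 _, by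
    rw [← hp.2]; simp only [_root_.margX3, Fintype.sum_prod_type]⟩

lemma IsPMF.margY3 [Fintype A] [Fintype B] [Fintype C] (hp : IsPMF p) : IsPMF (margY3 p) :=
  ⟨fun _ => sum_nonneg fun _ _ => sum_nonneg fun _ _ => hp.1 _, by
    rw [← hp.2]; simp only [_root_.margY3, Fintype.sum_prod_type]; exact sum_comm⟩

end Marginals

section CondMI

variable {A B U Z : Type*} [Fintype A]

lemma condMI_eq_sum [Fintype U] [Fintype Z] (p : A × U × Z → ℝ) :
    condMI p = ∑ w, p w * Real.log
      (p w * margZ3 p w.2.2 / (margXZ3 p (w.1, w.2.2) * margYZ3 p w.2)) := by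
  simp only [Fintype.sum_prod_type]
  rfl

lemma condMI_swap [Fintype U] [Fintype Z] (p : A × U × Z → ℝ) :
    condMI (fun w : U × A × Z => p (w.2.1, w.1, w.2.2)) = condMI p := by
  unfold condMI
  rw [sum_comm]
  refine sum_congr rfl fun a _ => sum_congr rfl fun u _ => sum_congr rfl fun z _ => ?_
  dsimp only
  rw [sum_comm, mul_comm (∑ u', p (a, u', z))]

/-- The law of `(B, U, Z)` when `B` is produced from `(A, Z)` by the channel `K`. -/
def mapFst (K : A × Z → B → ℝ) (p : A × U × Z → ℝ) : B × U × Z → ℝ :=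
  fun w => ∑ a, p (a, w.2) * K (a, w.2.2) w.1

variable {K : A × Z → B → ℝ} {p : A × U × Z → ℝ}

lemma margXZ3_mapFst [Fintype U] (K : A × Z → B → ℝ) (p : A × U × Z → ℝ) (b : B) (z : Z) :
    margXZ3 (mapFst K p) (b, z) = ∑ a, margXZ3 p (a, z) * K (a, z) b := by
  simp only [margXZ3, mapFst, sum_mul]
  exact sum_comm

lemma margX3_mapFst [Fintype U] [Fintype Z] (K : A → B → ℝ) (p : A × U × Z → ℝ) (b : B) :
    margX3 (mapFst (fun v => K v.1) p) b = ∑ a, margX3 p a * K a b := by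
  simp only [margX3_eq_sum_margXZ3, margXZ3_mapFst, sum_mul]
  exact sum_comm

lemma margYZ3_mapFst [Fintype B] (hK : ∀ v, IsPMF (K v)) (p : A × U × Z → ℝ) (v : U × Z) :
    margYZ3 (mapFst K p) v = margYZ3 p v := by
  simp only [margYZ3, mapFst]
  rw [sum_comm]
  simp only [← mul_sum, (hK _).2, mul_one]

lemma margZ3_mapFst [Fintype B] [Fintype U] (hK : ∀ v, IsPMF (K v)) (p : A × U × Z → ℝ) (z : Z) :
    margZ3 (mapFst K p) z = margZ3 p z := by
  simp only [margZ3_eq_sum_margYZ3, margYZ3_mapFst hK]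

/-- The log-sum inequality over `a` for the terms `p (a, u, z) K(b|a,z)` and
`p (a, z) K(b|a,z) p (u, z) / p (z)`. -/
lemma mapFst_mul_log_le [Fintype B] [Fintype U] (hp : ∀ w, 0 ≤ p w)
    (hK : ∀ v, IsPMF (K v)) (b : B) (u : U) (z : Z) :
    mapFst K p (b, u, z) * Real.log (mapFst K p (b, u, z) * margZ3 p z /
        (margXZ3 (mapFst K p) (b, z) * margYZ3 p (u, z))) ≤
      ∑ a, K (a, z) b * (p (a, u, z) * Real.log (p (a, u, z) * margZ3 p z /
        (margXZ3 p (a, z) * margYZ3 p (u, z)))) := by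
  have hsupport : ∀ a, margXZ3 p (a, z) * K (a, z) b * (margYZ3 p (u, z) / margZ3 p z) = 0 →
      p (a, u, z) * K (a, z) b = 0 := by
    intro a h
    by_contra hne
    have hpos : 0 < p (a, u, z) := (hp _).lt_of_ne' (left_ne_zero_of_mul hne)
    exact (mul_ne_zero
      (mul_ne_zero (hpos.trans_le (le_margXZ3 hp _)).ne' (right_ne_zero_of_mul hne))
      (div_pos (hpos.trans_le (le_margYZ3 hp _)) (hpos.trans_le (le_margZ3 hp _))).ne') h
  have hlogsum := sum_mul_log_sum_div_sum_le
    (fun a => mul_nonneg (hp (a, u, z)) ((hK (a, z)).1 b))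
    (fun a => mul_nonneg (mul_nonneg (margXZ3_nonneg hp (a, z)) ((hK (a, z)).1 b))
      (div_nonneg (margYZ3_nonneg hp (u, z)) (margZ3_nonneg hp z))) hsupport
  rw [← sum_mul, ← mul_div_assoc, div_div_eq_mul_div, ← margXZ3_mapFst] at hlogsum
  refine hlogsum.trans_eq (sum_congr rfl fun a _ => ?_)
  rcases eq_or_ne (K (a, z) b) 0 with h0 | hne
  · simp [h0]
  · have hratio : p (a, u, z) * K (a, z) b / (margXZ3 p (a, z) * K (a, z) b *
        (margYZ3 p (u, z) / margZ3 p z)) =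
        p (a, u, z) * margZ3 p z / (margXZ3 p (a, z) * margYZ3 p (u, z)) := by
      rw [mul_right_comm _ (K (a, z) b), mul_div_mul_right _ _ hne, ← mul_div_assoc,
        div_div_eq_mul_div]
    rw [hratio]
    ring

lemma condMI_mapFst_le [Fintype B] [Fintype U] [Fintype Z] (hp : ∀ w, 0 ≤ p w)
    (hK : ∀ v, IsPMF (K v)) :
    condMI (mapFst K p) ≤ condMI p := by
  calc condMI (mapFst K p)
      ≤ ∑ w : B × U × Z, ∑ a, K (a, w.2.2) w.1 *
          (p (a, w.2) * Real.log (p (a, w.2) * margZ3 p w.2.2 /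
            (margXZ3 p (a, w.2.2) * margYZ3 p w.2))) := by
        rw [condMI_eq_sum]
        simp only [margYZ3_mapFst hK, margZ3_mapFst hK]
        exact sum_le_sum fun w _ => mapFst_mul_log_le hp hK w.1 w.2.1 w.2.2
    _ = condMI p := by
        rw [condMI_eq_sum, sum_comm, Fintype.sum_prod_type (α₁ := A)]
        refine sum_congr rfl fun a _ => ?_
        rw [Fintype.sum_prod_type, sum_comm]
        simp only [← sum_mul, (hK _).2, one_mul]

/-- Compares the marginal law of `(U, Z)` with that of a uniform `U` independent of `Z`. -/
lemma sum_mul_log_margYZ3_div_nonneg [Fintype U] [Fintype Z] [Nonempty U] (hp : ∀ w, 0 ≤ p w) :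
    0 ≤ ∑ w, p w * Real.log (margYZ3 p w.2 / (margZ3 p w.2.2 / Fintype.card U)) := by
  have hcard : (Fintype.card U : ℝ) ≠ 0 := Nat.cast_ne_zero.2 Fintype.card_ne_zero
  have hsupport : ∀ v : U × Z, margZ3 p v.2 / Fintype.card U = 0 → margYZ3 p v = 0 := by
    intro v h
    have hz : ∑ u, margYZ3 p (u, v.2) = 0 := by
      simpa [hcard, margZ3_eq_sum_margYZ3] using h
    exact (sum_eq_zero_iff_of_nonneg fun _ _ => margYZ3_nonneg hp _).1 hz v.1 (mem_univ _)
  have hmass : ∑ v : U × Z, margZ3 p v.2 / Fintype.card U = ∑ v, margYZ3 p v := by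
    calc ∑ v : U × Z, margZ3 p v.2 / Fintype.card U = ∑ z, margZ3 p z := by
          rw [Fintype.sum_prod_type]
          dsimp only
          rw [sum_const, card_univ, nsmul_eq_mul, ← sum_div, mul_div_cancel₀ _ hcard]
      _ = ∑ v, margYZ3 p v := by
          rw [Fintype.sum_prod_type_right]
          exact sum_congr rfl fun z _ => margZ3_eq_sum_margYZ3 p z
  calc 0 ≤ ∑ v, margYZ3 p v * Real.log (margYZ3 p v / (margZ3 p v.2 / Fintype.card U)) :=
        sum_mul_log_div_nonneg (margYZ3_nonneg hp)
          (fun v => div_nonneg (margZ3_nonneg hp v.2) (Nat.cast_nonneg _)) hsupport hmass.le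
    _ = _ := sum_margYZ3_mul p fun v => Real.log (margYZ3 p v / (margZ3 p v.2 / Fintype.card U))

lemma condMI_le_log_mul_card [Fintype U] [Fintype Z] (hp : IsPMF p) {c : ℝ} (hc : 0 < c)
    (hle : ∀ w, p w ≤ c * margXZ3 p (w.1, w.2.2)) :
    condMI p ≤ Real.log (c * Fintype.card U) := by
  have : Nonempty U := by
    by_contra hempty
    rw [not_nonempty_iff] at hempty
    simpa using hp.2
  have pointwise : ∀ w, p w * Real.log
        (p w * margZ3 p w.2.2 / (margXZ3 p (w.1, w.2.2) * margYZ3 p w.2)) ≤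
      p w * Real.log (c * Fintype.card U) -
        p w * Real.log (margYZ3 p w.2 / (margZ3 p w.2.2 / Fintype.card U)) := by
    intro w
    rcases (hp.1 w).eq_or_lt with h0 | hpos
    · simp [← h0]
    have hxz := hpos.trans_le (le_margXZ3 hp.1 w)
    have hyz := hpos.trans_le (le_margYZ3 hp.1 w)
    have hz := hpos.trans_le (le_margZ3 hp.1 w)
    rw [← mul_sub, ← Real.log_div (by positivity) (by positivity)]
    refine mul_le_mul_of_nonneg_left (Real.log_le_log (by positivity) ?_) hpos.le
    calc p w * margZ3 p w.2.2 / (margXZ3 p (w.1, w.2.2) * margYZ3 p w.2)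
        ≤ c * margXZ3 p (w.1, w.2.2) * margZ3 p w.2.2 /
            (margXZ3 p (w.1, w.2.2) * margYZ3 p w.2) := by
          gcongr
          exact hle w
      _ = _ := by field_simp
  calc condMI p
      ≤ Real.log (c * Fintype.card U) -
          ∑ w, p w * Real.log (margYZ3 p w.2 / (margZ3 p w.2.2 / Fintype.card U)) := by
        rw [condMI_eq_sum, ← one_mul (Real.log (c * _)), ← hp.2, sum_mul, ← sum_sub_distrib]
        exact sum_le_sum fun w _ => pointwise w
    _ ≤ Real.log (c * Fintype.card U) := sub_le_self _ (sum_mul_log_margYZ3_div_nonneg hp.1)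

end CondMI

section Subadditivity

variable {ι A : Type*} [Fintype ι] [Fintype A] [DecidableEq ι] [DecidableEq A]

lemma sum_mul_prod_law_div_sum_le (f : (ι → A) → ℝ) (hf : ∀ as, 0 ≤ f as) :
    ∑ as : ι → A, (∑ as', f as') * ∏ i, law f (fun as' => as' i) (as i) / ∑ as', f as' ≤
      ∑ as, f as := by
  rw [← mul_sum, sum_pi_prod fun i a => law f (fun as => as i) a / ∑ as, f as]
  simp only [← sum_div, sum_law]
  exact mul_le_of_le_one_right (sum_nonneg' hf)
    (prod_le_one (fun _ _ => div_nonneg (sum_nonneg' hf) (sum_nonneg' hf))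
      fun _ _ => div_self_le_one _)

/-- Subadditivity of entropy: Gibbs' inequality against the product of the coordinate laws. -/
lemma sum_mul_sum_log_law_div_le {f : (ι → A) → ℝ} (hf : ∀ as, 0 ≤ f as) :
    ∑ as, f as * ∑ i, Real.log (law f (fun as' => as' i) (as i) / ∑ as', f as') ≤
      ∑ as, f as * Real.log (f as / ∑ as', f as') := by
  set F := ∑ as, f as
  set q : (ι → A) → ℝ := fun as => ∏ i, law f (fun as' => as' i) (as i) / F
  have hF : 0 ≤ F := sum_nonneg' hf
  have hle : ∀ as, f as ≤ F := fun as =>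
    single_le_sum (fun as' _ => hf as') (mem_univ as)
  have hlaw : ∀ as i, f as ≤ law f (fun as' => as' i) (as i) := fun as i =>
    le_law_apply hf (fun as' => as' i) as
  have hfactor : ∀ as, 0 < f as → ∀ i, 0 < law f (fun as' => as' i) (as i) / F :=
    fun as hpos i => div_pos (hpos.trans_le (hlaw as i)) (hpos.trans_le (hle as))
  have hq : ∀ as, 0 < f as → 0 < q as := fun as hpos => prod_pos fun i _ => hfactor as hpos i
  have hgibbs : 0 ≤ ∑ as, f as * Real.log (f as / (F * q as)) := by
    refine sum_mul_log_div_nonneg hf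
      (fun as => mul_nonneg hF (prod_nonneg fun i _ => div_nonneg (law_nonneg hf _ _) hF))
      (fun as h => ?_) (sum_mul_prod_law_div_sum_le f hf)
    by_contra hne
    have hpos := (hf as).lt_of_ne' hne
    exact (mul_pos (hpos.trans_le (hle as)) (hq as hpos)).ne' h
  have hsplit : ∀ as, f as * Real.log (f as / (F * q as)) = f as * Real.log (f as / F) -
      f as * ∑ i, Real.log (law f (fun as' => as' i) (as i) / F) := by
    intro as
    rcases (hf as).eq_or_lt with h0 | hpos
    · simp [← h0]
    rw [← div_div, Real.log_div (div_pos hpos (hpos.trans_le (hle as))).ne' (hq as hpos).ne',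
      Real.log_prod fun i _ => (hfactor as hpos i).ne', mul_sub]
  rw [sum_congr rfl fun as _ => hsplit as, sum_sub_distrib] at hgibbs
  linarith

end Subadditivity

section TimeSharing

variable {A W Z : Type*} [Fintype A] [Fintype W] [Fintype Z] {n : ℕ}

open Classical in
/-- Single-letterization of a law `P` of `(Aⁿ, W, Zⁿ)`: the law of `(A_I, (I, W, Zⁿ), Z_I)` with
a time index `I` uniform and independent of everything else. -/
def timeShare (P : (Fin n → A) × W × (Fin n → Z) → ℝ) :
    A × (Fin n × W × (Fin n → Z)) × Z → ℝ :=
  law (fun ω : Fin n × (Fin n → A) × W × (Fin n → Z) => 1 / (n : ℝ) * P ω.2)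
    fun ω => (ω.2.1 ω.1, (ω.1, ω.2.2), ω.2.2.2 ω.1)

variable {P : (Fin n → A) × W × (Fin n → Z) → ℝ} {r : A × Z → ℝ}

lemma timeShare_nonneg (hP : ∀ v, 0 ≤ P v) (w : A × (Fin n × W × (Fin n → Z)) × Z) :
    0 ≤ timeShare P w := by
  classical
  exact law_nonneg (fun _ => mul_nonneg (by positivity) (hP _)) _ w

lemma sum_timeShare_mul (P : (Fin n → A) × W × (Fin n → Z) → ℝ)
    (F : A × (Fin n × W × (Fin n → Z)) × Z → ℝ) :
    ∑ w, timeShare P w * F w =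
      1 / (n : ℝ) * ∑ i, ∑ v, P v * F (v.1 i, (i, v.2), v.2.2 i) := by
  classical
  rw [timeShare, sum_law_mul, Fintype.sum_prod_type, mul_sum]
  simp only [mul_sum, mul_assoc]

lemma timeShare_apply [DecidableEq A] (P : (Fin n → A) × W × (Fin n → Z) → ℝ) (a : A) (i : Fin n)
    (v : W × (Fin n → Z)) :
    timeShare P (a, (i, v), v.2 i) =
      1 / (n : ℝ) * law (fun as => P (as, v)) (fun as => as i) a := by
  simp only [timeShare, law, mul_sum]
  rw [Fintype.sum_prod_type, Fintype.sum_eq_single i fun j hj => by simp [hj],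
    Fintype.sum_prod_type]
  refine sum_congr rfl fun as _ => ?_
  rw [Fintype.sum_eq_single v fun v' hv => by simp [hv]]
  simp

lemma margYZ3_timeShare (P : (Fin n → A) × W × (Fin n → Z) → ℝ) (i : Fin n) (v : W × (Fin n → Z)) :
    margYZ3 (timeShare P) ((i, v), v.2 i) = 1 / (n : ℝ) * margYZ3 P v := by
  classical
  simp only [margYZ3, timeShare_apply, ← mul_sum, sum_law]

lemma margXZ3_timeShare (hn : n ≠ 0) (hr : IsPMF r) (hP : margXZ3 P = pairProd n r) :
    margXZ3 (timeShare P) = r := by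
  classical
  refine dotProduct_eq _ _ fun g => ?_
  calc ∑ v, margXZ3 (timeShare P) v * g v
      = 1 / (n : ℝ) * ∑ i : Fin n, ∑ v, P v * g (v.1 i, v.2.2 i) := by
        rw [sum_margXZ3_mul, sum_timeShare_mul]
    _ = 1 / (n : ℝ) * ∑ _i : Fin n, ∑ v, r v * g v := by
        congr 1
        refine sum_congr rfl fun i _ => ?_
        rw [← sum_margXZ3_mul P fun v => g (v.1 i, v.2 i), hP, ← sum_law_mul, law_pairProd_apply hr]
    _ = ∑ v, r v * g v := by
        rw [sum_const, card_univ, Fintype.card_fin, nsmul_eq_mul, ← mul_assoc,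
          one_div_mul_cancel (Nat.cast_ne_zero.2 hn), one_mul]

lemma condMI_eq_of_margXZ3_eq_pairProd (hP : ∀ v, 0 ≤ P v) (hr : ∀ v, 0 ≤ r v)
    (hPr : margXZ3 P = pairProd n r) :
    condMI P = ∑ v, P v * (Real.log (P v / margYZ3 P v.2) +
      ∑ i, Real.log ((∑ a, r (a, v.2.2 i)) / r (v.1 i, v.2.2 i))) := by
  rw [condMI_eq_sum]
  refine sum_congr rfl fun v _ => ?_
  rcases (hP v).eq_or_lt with h0 | hpos
  · simp [← h0]
  have hxz : 0 < ∏ i, r (v.1 i, v.2.2 i) := by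
    have := hpos.trans_le (le_margXZ3 hP v)
    rwa [hPr] at this
  have hri : ∀ i, r (v.1 i, v.2.2 i) ≠ 0 := fun i => prod_ne_zero_iff.1 hxz.ne' i (mem_univ i)
  have hrz : ∀ i, (∑ a, r (a, v.2.2 i)) ≠ 0 := fun i =>
    (((hr _).lt_of_ne' (hri i)).trans_le
      (single_le_sum (f := fun a => r (a, v.2.2 i)) (fun _ _ => hr _) (mem_univ (v.1 i)))).ne'
  rw [margZ3_eq_sum_margXZ3, hPr, sum_pairProd_left,
    ← Real.log_prod fun i _ => div_ne_zero (hrz i) (hri i), prod_div_distrib,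
    ← Real.log_mul (div_pos hpos (hpos.trans_le (le_margYZ3 hP v))).ne'
      (div_ne_zero (prod_ne_zero_iff.2 fun i _ => hrz i) hxz.ne')]
  congr 2
  rw [div_mul_div_comm, mul_comm (margYZ3 P v.2)]
  rfl

lemma condMI_timeShare [DecidableEq A] (hP : ∀ v, 0 ≤ P v) (hr : IsPMF r)
    (hPr : margXZ3 P = pairProd n r) :
    condMI (timeShare P) = 1 / (n : ℝ) * ∑ i, ∑ v, P v *
      (Real.log (law (fun as => P (as, v.2)) (fun as => as i) (v.1 i) / margYZ3 P v.2) +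
        Real.log ((∑ a, r (a, v.2.2 i)) / r (v.1 i, v.2.2 i))) := by
  rw [condMI_eq_sum, sum_timeShare_mul]
  congr 1
  refine sum_congr rfl fun i _ => sum_congr rfl fun v _ => ?_
  have hn : n ≠ 0 := i.pos.ne'
  rcases (hP v).eq_or_lt with h0 | hpos
  · simp [← h0]
  set ℓ := law (fun as => P (as, v.2)) (fun as => as i) (v.1 i)
  have hℓ : 0 < ℓ := hpos.trans_le (le_law_apply (fun as => hP (as, v.2)) (fun as => as i) v.1)
  have hyz : 0 < margYZ3 P v.2 := hpos.trans_le (le_margYZ3 hP v)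
  have hts : timeShare P (v.1 i, (i, v.2), v.2.2 i) = 1 / (n : ℝ) * ℓ := timeShare_apply P _ i v.2
  have hTS : 0 < timeShare P (v.1 i, (i, v.2), v.2.2 i) := by rw [hts]; positivity
  have hxz : 0 < r (v.1 i, v.2.2 i) := by
    simpa [margXZ3_timeShare hn hr hPr] using hTS.trans_le (le_margXZ3 (timeShare_nonneg hP) _)
  have hz : 0 < ∑ a, r (a, v.2.2 i) := by
    simpa [margZ3_eq_sum_margXZ3, margXZ3_timeShare hn hr hPr] using
      hTS.trans_le (le_margZ3 (timeShare_nonneg hP) _)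
  rw [← Real.log_mul (by positivity) (by positivity), margZ3_eq_sum_margXZ3,
    margXZ3_timeShare hn hr hPr, margYZ3_timeShare, hts]
  congr 2
  field_simp

lemma condMI_timeShare_le (hP : ∀ v, 0 ≤ P v) (hr : IsPMF r) (hPr : margXZ3 P = pairProd n r) :
    condMI (timeShare P) ≤ 1 / (n : ℝ) * condMI P := by
  classical
  rw [condMI_timeShare hP hr hPr, condMI_eq_of_margXZ3_eq_pairProd hP hr.1 hPr, sum_comm]
  refine mul_le_mul_of_nonneg_left ?_ (by positivity)
  simp only [← mul_sum, sum_add_distrib, mul_add]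
  refine add_le_add_left ?_ _
  rw [Fintype.sum_prod_type_right (α₁ := Fin n → A), Fintype.sum_prod_type_right (α₁ := Fin n → A)]
  exact sum_le_sum fun v _ => sum_mul_sum_log_law_div_le fun as => hP (as, v)

end TimeSharing

section Schemes

variable {A B B' U Z : Type*}

/-- A law `p` of `(A, U, Z)` and a decoding channel `V` from `(U, Z)` to `B` form a compression
scheme for a source `(A, Z)` of law `S`. Taking `U` to be the message together with the common
randomness, or an auxiliary variable, covers both `n`-letter codes and single-letter test channels;
the reconstruction `B` is conditionally independent of `A` given `(U, Z)` by construction. -/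
structure IsScheme [Fintype B] [Fintype U] (S : A × Z → ℝ) (p : A × U × Z → ℝ)
    (V : U × Z → B → ℝ) : Prop where
  nonneg : ∀ w, 0 ≤ p w
  channel : ∀ v, IsPMF (V v)
  source : margXZ3 p = S

/-- The law of `(B, U, Z)` in the scheme `(p, V)`. -/
def reconLaw [Fintype A] (p : A × U × Z → ℝ) (V : U × Z → B → ℝ) : B × U × Z → ℝ :=
  fun w => margYZ3 p w.2 * V w.2 w.1

/-- The law of `(A, B, Z)` in the scheme `(p, V)`. -/
def sourceReconLaw [Fintype U] (p : A × U × Z → ℝ) (V : U × Z → B → ℝ) : A × B × Z → ℝ :=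
  fun w => ∑ u, p (w.1, u, w.2.2) * V (u, w.2.2) w.2.1

/-- The expected distortion `E[D(A, B)]` in the scheme `(p, V)`. -/
def expDistortion [Fintype A] [Fintype B] [Fintype U] [Fintype Z] (p : A × U × Z → ℝ)
    (V : U × Z → B → ℝ) (D : A → B → ℝ) : ℝ :=
  ∑ w, p w * ∑ b, V w.2 b * D w.1 b

/-- The decoding channel `V` followed by the channel `K` applied to the reconstruction. -/
def postProcess [Fintype B] (V : U × Z → B → ℝ) (K : B → B' → ℝ) : U × Z → B' → ℝ :=
  fun v b' => ∑ b, V v b * K b b'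

lemma reconLaw_postProcess [Fintype A] [Fintype B] (p : A × U × Z → ℝ) (V : U × Z → B → ℝ)
    (K : B → B' → ℝ) :
    reconLaw p (postProcess V K) = mapFst (fun v => K v.1) (reconLaw p V) := by
  funext w
  simp only [reconLaw, postProcess, mapFst, mul_sum, mul_assoc]

variable [Fintype B] [Fintype U] {S : A × Z → ℝ} {p : A × U × Z → ℝ} {V : U × Z → B → ℝ}

lemma IsScheme.isPMF [Fintype A] [Fintype Z] (h : IsScheme S p V) (hS : IsPMF S) : IsPMF p :=
  ⟨h.nonneg, by rw [← sum_margXZ3, h.source, hS.2]⟩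

lemma sum_reconLaw_mul [Fintype A] [Fintype Z] (p : A × U × Z → ℝ) (V : U × Z → B → ℝ)
    (g : B × U × Z → ℝ) :
    ∑ w, reconLaw p V w * g w = ∑ w, p w * ∑ b, V w.2 b * g (b, w.2) := by
  rw [← sum_margYZ3_mul p fun v => ∑ b, V v b * g (b, v), Fintype.sum_prod_type_right]
  simp only [reconLaw, mul_assoc, mul_sum]

lemma IsScheme.reconLaw_nonneg [Fintype A] (h : IsScheme S p V) (w : B × U × Z) :
    0 ≤ reconLaw p V w :=
  mul_nonneg (margYZ3_nonneg h.nonneg _) ((h.channel _).1 _)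

lemma IsScheme.isPMF_reconLaw [Fintype A] [Fintype Z] (h : IsScheme S p V) (hS : IsPMF S) :
    IsPMF (reconLaw p V) :=
  ⟨h.reconLaw_nonneg, by
    simpa [(h.channel _).2, (h.isPMF hS).2] using sum_reconLaw_mul p V fun _ => 1⟩

lemma IsScheme.margXZ3_sourceReconLaw (h : IsScheme S p V) : margXZ3 (sourceReconLaw p V) = S := by
  rw [← h.source]
  funext v
  simp only [margXZ3, sourceReconLaw]
  rw [sum_comm]
  simp only [← mul_sum, (h.channel _).2, mul_one]

lemma IsScheme.isPMF_sourceReconLaw [Fintype A] [Fintype Z] (h : IsScheme S p V) (hS : IsPMF S) :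
    IsPMF (sourceReconLaw p V) :=
  ⟨fun _ => sum_nonneg fun _ _ => mul_nonneg (h.nonneg _) ((h.channel _).1 _), by
    rw [← sum_margXZ3, h.margXZ3_sourceReconLaw, hS.2]⟩

lemma IsScheme.condMI_sourceReconLaw_le [Fintype A] [Fintype Z] (h : IsScheme S p V) :
    condMI (sourceReconLaw p V) ≤ condMI p := by
  set pswap : U × A × Z → ℝ := fun w => p (w.2.1, w.1, w.2.2)
  calc condMI (sourceReconLaw p V)
      = condMI (mapFst V pswap) := condMI_swap (mapFst V pswap)
    _ ≤ condMI pswap := condMI_mapFst_le (fun _ => h.nonneg _) h.channel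
    _ = condMI p := condMI_swap p

lemma IsScheme.postProcess [Fintype B'] {K : B → B' → ℝ} (h : IsScheme S p V)
    (hK : ∀ b, IsPMF (K b)) : IsScheme S p (postProcess V K) where
  nonneg := h.nonneg
  channel v := ⟨fun _ => sum_nonneg fun b _ => mul_nonneg ((h.channel v).1 b) ((hK b).1 _), by
    simp only [_root_.postProcess]
    rw [sum_comm]
    simp only [← mul_sum, (hK _).2, mul_one, (h.channel v).2]⟩
  source := h.source

lemma IsScheme.expDistortion_postProcess_le [Fintype A] [Fintype Z] {K : B → B → ℝ}
    {D : A → B → ℝ} {C : ℝ} (h : IsScheme S p V) (hK : ∀ b, IsPMF (K b))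
    (hD : ∀ a b b', D a b' - D a b ≤ C) :
    expDistortion p (_root_.postProcess V K) D ≤
      expDistortion p V D + C * ∑ b, margX3 (reconLaw p V) b * (1 - K b b) := by
  classical
  have hchange : ∀ a b, ∑ b', K b b' * D a b' ≤ D a b + C * (1 - K b b) := by
    intro a b
    calc ∑ b', K b b' * D a b'
        = D a b + ∑ b', K b b' * (D a b' - D a b) := by
          simp only [mul_sub, sum_sub_distrib, ← sum_mul, (hK b).2]
          ring
      _ ≤ D a b + ∑ b', (K b b' * C - if b' = b then K b b' * C else 0) := by
          gcongr with b' _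
          split_ifs with hb
          · simp [hb]
          · simpa using mul_le_mul_of_nonneg_left (hD a b b') ((hK b).1 b')
      _ = D a b + C * (1 - K b b) := by
          rw [sum_sub_distrib, ← sum_mul, (hK b).2, sum_ite_eq' univ b, if_pos (mem_univ b)]
          ring
  calc expDistortion p (_root_.postProcess V K) D
      = ∑ w, p w * ∑ b, V w.2 b * ∑ b', K b b' * D w.1 b' := by
        simp only [expDistortion, _root_.postProcess, sum_mul, mul_sum, mul_assoc]
        exact sum_congr rfl fun w _ => sum_comm
    _ ≤ ∑ w, p w * ∑ b, V w.2 b * (D w.1 b + C * (1 - K b b)) := by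
        gcongr with w _ b _
        · exact h.nonneg w
        · exact (h.channel w.2).1 b
        · exact hchange w.1 b
    _ = expDistortion p V D + ∑ w, reconLaw p V w * (C * (1 - K w.1 w.1)) := by
        rw [sum_reconLaw_mul p V fun w => C * (1 - K w.1 w.1)]
        simp only [expDistortion, mul_add, sum_add_distrib]
    _ = expDistortion p V D + C * ∑ b, margX3 (reconLaw p V) b * (1 - K b b) := by
        simp only [Fintype.sum_prod_type, margX3, sum_mul, mul_sum, mul_left_comm C]

end Schemes

section TimeSharedSchemes

variable {A B W Z : Type*} [Fintype A] [Fintype B] [Fintype W] [Fintype Z] {n : ℕ}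

open Classical in
/-- The channel from `((I, W, Zⁿ), Z_I)` to `B_I`, where `Bⁿ` is decoded from `(W, Zⁿ)` by `V`. -/
def timeShareChannel (V : W × (Fin n → Z) → (Fin n → B) → ℝ) :
    (Fin n × W × (Fin n → Z)) × Z → B → ℝ :=
  fun v => law (V v.1.2) fun bs => bs v.1.1

variable {P : (Fin n → A) × W × (Fin n → Z) → ℝ} {V : W × (Fin n → Z) → (Fin n → B) → ℝ}
  {r : A × Z → ℝ}

lemma IsScheme.timeShare (h : IsScheme (pairProd n r) P V) (hn : n ≠ 0) (hr : IsPMF r) :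
    IsScheme r (timeShare P) (timeShareChannel V) where
  nonneg := timeShare_nonneg h.nonneg
  channel v := by
    classical
    exact (h.channel v.1.2).law _
  source := margXZ3_timeShare hn hr h.source

lemma reconLaw_timeShare (P : (Fin n → A) × W × (Fin n → Z) → ℝ)
    (V : W × (Fin n → Z) → (Fin n → B) → ℝ) :
    reconLaw (timeShare P) (timeShareChannel V) = timeShare (reconLaw P V) := by
  refine dotProduct_eq _ _ fun g => ?_
  simp only [dotProduct, sum_timeShare_mul, sum_reconLaw_mul, timeShareChannel, sum_law_mul]

lemma expDistortion_timeShare (P : (Fin n → A) × W × (Fin n → Z) → ℝ)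
    (V : W × (Fin n → Z) → (Fin n → B) → ℝ) (D : A → B → ℝ) :
    expDistortion (timeShare P) (timeShareChannel V) D =
      expDistortion P V fun as bs => 1 / (n : ℝ) * ∑ i, D (as i) (bs i) := by
  simp only [expDistortion, timeShareChannel, sum_law_mul]
  rw [sum_timeShare_mul P fun w => ∑ bs, V w.2.1.2 bs * D w.1 (bs w.2.1.1), sum_comm, mul_sum]
  refine sum_congr rfl fun v _ => ?_
  simp only [mul_sum]
  rw [sum_comm]
  exact sum_congr rfl fun bs _ => sum_congr rfl fun i _ => by ring

end TimeSharedSchemes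

section TotalVariation

variable {α : Type*} [Fintype α] {p q : α → ℝ}

lemma dTV_nonneg (p q : α → ℝ) : 0 ≤ dTV p q :=
  Real.iSup_nonneg fun _ => abs_nonneg _

lemma sum_sub_sum_le_dTV (p q : α → ℝ) (s : Finset α) :
    ∑ x ∈ s, p x - ∑ x ∈ s, q x ≤ dTV p q :=
  (le_abs_self _).trans <|
    le_ciSup (f := fun t : Finset α => |∑ x ∈ t, p x - ∑ x ∈ t, q x|)
      (Set.finite_range _).bddAbove s

lemma IsPMF.sum_mem_Icc (hp : IsPMF p) (s : Finset α) : ∑ x ∈ s, p x ∈ Set.Icc (0 : ℝ) 1 :=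
  ⟨sum_nonneg fun x _ => hp.1 x,
    hp.2 ▸ sum_le_sum_of_subset_of_nonneg (subset_univ s) fun x _ _ => hp.1 x⟩

lemma dTV_le_one (hp : IsPMF p) (hq : IsPMF q) : dTV p q ≤ 1 :=
  ciSup_le fun s => Real.dist_le_of_mem_Icc_01 (hp.sum_mem_Icc s) (hq.sum_mem_Icc s)

lemma limsupTV_self (p : α → ℝ) : limsupTV p p = 0 := by
  simp [limsupTV, dTV]

lemma limsupTV_nonneg (hp : IsPMF p) (hq : IsPMF q) : 0 ≤ limsupTV p q :=
  le_limsup_of_frequently_le (Frequently.of_forall fun _ => dTV_nonneg _ _)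
    (isBoundedUnder_of ⟨1, fun n => dTV_le_one (hp.prodDist n) (hq.prodDist n)⟩)

lemma limsupTV_le_one (hp : IsPMF p) (hq : IsPMF q) : limsupTV p q ≤ 1 :=
  limsup_le_of_le (isCoboundedUnder_le_of_le atTop (x := 0) fun _ => dTV_nonneg _ _)
    (Eventually.of_forall fun n => dTV_le_one (hp.prodDist n) (hq.prodDist n))

lemma fFun_le_one {X Z : Type*} [Fintype X] [Fintype Z] (pXZ : X × Z → ℝ) (D : X → X → ℝ)
    (Δ : ℝ) : fFun pXZ D Δ ≤ 1 := by
  rw [fFun, gFun]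
  rcases Set.eq_empty_or_nonempty {v | ∃ q : X × X × Z → ℝ, IsPMF q ∧ margXZ3 q = pXZ ∧
    condMI q ≤ Rdist pXZ D Δ ∧ expD3 q D ≤ Δ ∧ v = limsupTV (margX3 q) (margY3 q)} with
    hempty | ⟨v, hv⟩
  · rw [hempty, Real.sInf_empty]
    exact zero_le_one
  · refine csInf_le_of_le ⟨0, ?_⟩ hv ?_
    · rintro _ ⟨q, hq, -, -, -, rfl⟩
      exact limsupTV_nonneg hq.margX3 hq.margY3
    · obtain ⟨q, hq, -, -, -, rfl⟩ := hv
      exact limsupTV_le_one hq.margX3 hq.margY3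

end TotalVariation

section Bhattacharyya

variable {α : Type*} [Fintype α] {p q : α → ℝ}

/-- The Bhattacharyya coefficient of two distributions. Being multiplicative, it governs how fast
two product distributions separate. -/
def bhattacharyya (p q : α → ℝ) : ℝ :=
  ∑ x, √(p x * q x)

lemma bhattacharyya_nonneg (p q : α → ℝ) : 0 ≤ bhattacharyya p q :=
  sum_nonneg fun _ _ => Real.sqrt_nonneg _

lemma bhattacharyya_prodDist (hp : ∀ x, 0 ≤ p x) (hq : ∀ x, 0 ≤ q x) (n : ℕ) :
    bhattacharyya (prodDist n p) (prodDist n q) = bhattacharyya p q ^ n := by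
  simp only [bhattacharyya, prodDist, ← prod_mul_distrib,
    Real.sqrt_prod _ fun _ _ => mul_nonneg (hp _) (hq _)]
  simpa using sum_pi_prod fun (_ : Fin n) x => √(p x * q x)

lemma sum_min_le_bhattacharyya (hp : ∀ x, 0 ≤ p x) (hq : ∀ x, 0 ≤ q x) :
    ∑ x, min (p x) (q x) ≤ bhattacharyya p q :=
  sum_le_sum fun x _ => Real.le_sqrt_of_sq_le <| by
    rw [sq]
    exact mul_le_mul (min_le_left _ _) (min_le_right _ _) (le_min (hp x) (hq x)) (hp x)

lemma one_sub_dTV_le_sum_min (hp : ∑ x, p x = 1) : 1 - dTV p q ≤ ∑ x, min (p x) (q x) := by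
  have hmin : ∑ x, min (p x) (q x) = 1 - ∑ x with q x ≤ p x, (p x - q x) := by
    rw [← hp, sum_filter, ← sum_sub_distrib]
    refine sum_congr rfl fun x _ => ?_
    split_ifs with h
    · rw [min_eq_right h, sub_sub_cancel]
    · rw [min_eq_left (le_of_not_ge h), sub_zero]
  rw [hmin, sum_sub_distrib]
  linarith [sum_sub_sum_le_dTV p q {x | q x ≤ p x}]

lemma sum_sqrt_sub_sqrt_sq (hp : IsPMF p) (hq : IsPMF q) :
    ∑ x, (√(p x) - √(q x)) ^ 2 = 2 * (1 - bhattacharyya p q) := by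
  have hexpand : ∀ x, (√(p x) - √(q x)) ^ 2 = p x + q x - 2 * √(p x * q x) := fun x => by
    rw [Real.sqrt_mul (hp.1 x), sub_sq, Real.sq_sqrt (hp.1 x), Real.sq_sqrt (hq.1 x)]
    ring
  simp only [hexpand, sum_sub_distrib, sum_add_distrib, ← mul_sum, hp.2, hq.2, bhattacharyya]
  ring

/-- Cauchy–Schwarz applied to `|p - q| = |√p - √q| (√p + √q)`. -/
lemma sum_abs_sub_sq_le (hp : IsPMF p) (hq : IsPMF q) :
    (∑ x, |p x - q x|) ^ 2 ≤ 8 * (1 - bhattacharyya p q) := by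
  have hfactor : ∀ x, |p x - q x| = |√(p x) - √(q x)| * (√(p x) + √(q x)) := fun x => by
    rw [← abs_of_nonneg (add_nonneg (Real.sqrt_nonneg (p x)) (Real.sqrt_nonneg (q x))), ← abs_mul,
      mul_comm, ← sq_sub_sq, Real.sq_sqrt (hp.1 x), Real.sq_sqrt (hq.1 x)]
  have hsum : ∑ x, (√(p x) + √(q x)) ^ 2 ≤ 4 := by
    calc ∑ x, (√(p x) + √(q x)) ^ 2 ≤ ∑ x, 2 * (√(p x) ^ 2 + √(q x) ^ 2) :=
          sum_le_sum fun x _ => add_sq_le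
      _ = 4 := by
          simp only [Real.sq_sqrt (hp.1 _), Real.sq_sqrt (hq.1 _), ← mul_sum, sum_add_distrib, hp.2,
            hq.2]
          norm_num
  calc (∑ x, |p x - q x|) ^ 2
      ≤ (∑ x, |√(p x) - √(q x)| ^ 2) * ∑ x, (√(p x) + √(q x)) ^ 2 := by
        simp only [hfactor]
        exact sum_mul_sq_le_sq_mul_sq _ _ _
    _ = 2 * (1 - bhattacharyya p q) * ∑ x, (√(p x) + √(q x)) ^ 2 := by
        simp only [sq_abs, sum_sqrt_sub_sqrt_sq hp hq]
    _ ≤ 2 * (1 - bhattacharyya p q) * 4 := by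
        refine mul_le_mul_of_nonneg_left hsum ?_
        rw [← sum_sqrt_sub_sqrt_sq hp hq]
        positivity
    _ = 8 * (1 - bhattacharyya p q) := by ring

variable (α) in
lemma eventually_sum_abs_sub_le_of_dTV_prodDist_le {c η : ℝ} (hc : c < 1) (hη : 0 < η) :
    ∀ᶠ n in atTop, ∀ p q : α → ℝ, IsPMF p → IsPMF q → dTV (prodDist n p) (prodDist n q) ≤ c →
      ∑ x, |p x - q x| ≤ η := by
  have hdecay : Tendsto (fun n : ℕ => Real.exp (-(η ^ 2 / 8)) ^ n) atTop (nhds 0) :=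
    tendsto_pow_atTop_nhds_zero_of_lt_one (Real.exp_pos _).le
      (Real.exp_lt_one_iff.2 (by linarith [pow_pos hη 2]))
  filter_upwards [hdecay.eventually_lt_const (sub_pos.2 hc)] with n hn p q hp hq hTV
  by_contra! hfar
  have hbc : bhattacharyya p q ≤ Real.exp (-(η ^ 2 / 8)) := by
    have hsq := (pow_le_pow_left₀ hη.le hfar.le 2).trans (sum_abs_sub_sq_le hp hq)
    linarith [Real.one_sub_le_exp_neg (η ^ 2 / 8)]
  have hoverlap : 1 - c ≤ bhattacharyya p q ^ n := by
    rw [← bhattacharyya_prodDist hp.1 hq.1]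
    linarith [one_sub_dTV_le_sum_min (q := prodDist n q) (hp.prodDist n).2,
      sum_min_le_bhattacharyya (hp.prodDist n).1 (hq.prodDist n).1]
  linarith [pow_le_pow_left₀ (bhattacharyya_nonneg p q) hbc n]

end Bhattacharyya

section Coupling

variable {α : Type*} [Fintype α] {p q : α → ℝ}

lemma exists_isPMF_sum_mul_eq {f : α → ℝ} (hf : ∀ x, 0 ≤ f x) (hp : IsPMF p) :
    ∃ g, IsPMF g ∧ ∀ x, (∑ y, f y) * g x = f x := by
  rcases eq_or_ne (∑ y, f y) 0 with h0 | hne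
  · refine ⟨p, hp, fun x => ?_⟩
    rw [h0, zero_mul, (sum_eq_zero_iff_of_nonneg fun y _ => hf y).1 h0 x (mem_univ x)]
  · exact ⟨fun x => f x / ∑ y, f y,
      ⟨fun x => div_nonneg (hf x) (sum_nonneg' hf), by rw [← sum_div, div_self hne]⟩,
      fun x => mul_div_cancel₀ _ hne⟩

/-- The channel of a maximal coupling: keep `y` with probability `min 1 (p y / q y)`, otherwise
resample from the normalized excess of `p` over `q`. -/
lemma exists_channel_map_eq (hp : IsPMF p) (hq : IsPMF q) :
    ∃ K : α → α → ℝ, (∀ y, IsPMF (K y)) ∧ (∀ y', ∑ y, q y * K y y' = p y') ∧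
      ∑ y, q y * (1 - K y y) ≤ ∑ y, |p y - q y| := by
  classical
  set m : α → ℝ := fun y => min 1 (p y / q y)
  have hm0 : ∀ y, 0 ≤ m y := fun y => le_min zero_le_one (div_nonneg (hp.1 y) (hq.1 y))
  have hm1 : ∀ y, 0 ≤ 1 - m y := fun y => sub_nonneg.2 (min_le_left _ _)
  have hqm : ∀ y, q y * m y = min (q y) (p y) := fun y => by
    rcases (hq.1 y).eq_or_lt with h0 | hpos
    · simp [← h0, hp.1 y]
    · rw [mul_min_of_nonneg _ _ hpos.le, mul_one, mul_div_cancel₀ _ hpos.ne']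
  obtain ⟨g, hg, hexcess⟩ := exists_isPMF_sum_mul_eq
    (fun y => sub_nonneg.2 (min_le_right (q y) (p y))) hp
  have hmass : ∑ y, q y * (1 - m y) = ∑ y, (p y - min (q y) (p y)) := by
    simp only [mul_sub, mul_one, hqm, sum_sub_distrib, hp.2, hq.2]
  refine ⟨fun y y' => (if y = y' then m y else 0) + (1 - m y) * g y', fun y => ⟨fun y' => ?_, ?_⟩,
    fun y' => ?_, ?_⟩
  · exact add_nonneg (by split_ifs <;> simp [hm0]) (mul_nonneg (hm1 y) (hg.1 y'))
  · simp [sum_add_distrib, ← mul_sum, hg.2]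
  · simp only [mul_add, sum_add_distrib, mul_ite, mul_zero, sum_ite_eq', mem_univ, if_true,
      ← mul_assoc, ← sum_mul, hmass, hexcess, hqm]
    ring
  · calc ∑ y, q y * (1 - ((if y = y then m y else 0) + (1 - m y) * g y))
        ≤ ∑ y, q y * (1 - m y) := by
          gcongr with y _
          · exact hq.1 y
          · simpa using mul_nonneg (hm1 y) (hg.1 y)
      _ ≤ ∑ y, |p y - q y| := by
          rw [hmass]
          exact sum_le_sum fun y _ => by grind

end Coupling

section SingleLetter

variable {X Z : Type*} [Fintype X] [Fintype Z] {pXZ : X × Z → ℝ} {D : X → X → ℝ}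
  {R R0 R' Δ Pc γ : ℝ} {Q : X → ℝ}

/-- Some single-letter scheme for `pXZ` has `I(X;U|Z) ≤ R`, `I(Y;U|Z) ≤ R'`, expected distortion at
most `Δ` and reconstruction law `Q`. As in `RegionSminus`, the auxiliary alphabet is in `Type`. -/
def HasSingleLetterScheme (pXZ : X × Z → ℝ) (D : X → X → ℝ) (R R' Δ : ℝ) (Q : X → ℝ) : Prop :=
  ∃ (U : Type) (_ : Fintype U) (p : X × U × Z → ℝ) (V : U × Z → X → ℝ),
    IsScheme pXZ p V ∧ condMI p ≤ R ∧ condMI (reconLaw p V) ≤ R' ∧ expDistortion p V D ≤ Δ ∧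
      margX3 (reconLaw p V) = Q

lemma expD3_sourceReconLaw {U : Type*} [Fintype U] (p : X × U × Z → ℝ) (V : U × Z → X → ℝ)
    (D : X → X → ℝ) : expD3 (sourceReconLaw p V) D = expDistortion p V D := by
  simp only [expD3, sourceReconLaw, expDistortion, Fintype.sum_prod_type, mul_sum, sum_mul,
    mul_assoc]
  refine sum_congr rfl fun x _ => ?_
  rw [sum_comm_cycle]
  exact sum_congr rfl fun u _ => sum_comm

lemma HasSingleLetterScheme.mono {R₁ R₂ R₁' R₂' Δ₁ Δ₂ : ℝ} {Q : X → ℝ}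
    (h : HasSingleLetterScheme pXZ D R₁ R₁' Δ₁ Q) (hR : R₁ ≤ R₂) (hR' : R₁' ≤ R₂')
    (hΔ : Δ₁ ≤ Δ₂) : HasSingleLetterScheme pXZ D R₂ R₂' Δ₂ Q := by
  obtain ⟨U, _, p, V, hscheme, h₁, h₂, h₃, hQ⟩ := h
  exact ⟨U, _, p, V, hscheme, h₁.trans hR, h₂.trans hR', h₃.trans hΔ, hQ⟩

lemma HasSingleLetterScheme.mem_RegionSplus (h : HasSingleLetterScheme pXZ D R R' Δ Q)
    (hpXZ : IsPMF pXZ) (hf : fFun pXZ D Δ ≤ Pc) (hR0 : 0 ≤ R0) :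
    (R + γ, R0, Δ, Pc) ∈ RegionSplus pXZ D γ := by
  obtain ⟨U, _, p, V, hscheme, hR, -, hΔ, -⟩ := h
  exact ⟨sourceReconLaw p V, hscheme.isPMF_sourceReconLaw hpXZ, hscheme.margXZ3_sourceReconLaw, hf,
    hR0, add_le_add_left (hscheme.condMI_sourceReconLaw_le.trans hR) γ,
    (expD3_sourceReconLaw p V D).trans_le hΔ⟩

lemma IsScheme.sminusWitness {U : Type*} [Fintype U] {p : X × U × Z → ℝ} {V : U × Z → X → ℝ}
    (h : IsScheme pXZ p V) (hpXZ : IsPMF pXZ) (hR : condMI p + γ ≤ R)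
    (hR' : condMI (reconLaw p V) + γ ≤ R + R0) (hΔ : expDistortion p V D ≤ Δ)
    (hTV : limsupTV (fun x => ∑ z, pXZ (x, z)) (margX3 (reconLaw p V)) ≤ Pc)
    (hf : Pc < fFun pXZ D Δ) (hR0 : 0 < R0) :
    SminusWitness pXZ D γ R R0 Δ Pc U fun w => p (w.1, w.2.2) * V w.2.2 w.2.1 := by
  have hsumY : ∀ x v, ∑ y, p (x, v) * V v y = p (x, v) := fun x v => by
    rw [← mul_sum, (h.channel v).2, mul_one]
  have hsumX : ∀ y v, ∑ x, p (x, v) * V v y = reconLaw p V (y, v) := fun y v =>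
    (sum_mul _ _ _).symm
  refine ⟨⟨fun w => mul_nonneg (h.nonneg _) ((h.channel _).1 _), ?_⟩, fun x z => ?_,
    fun x y u z => ?_, hf, hR0, ?_, ?_, ?_, ?_⟩
  · rw [← (h.isPMF hpXZ).2]
    rw [Fintype.sum_prod_type, Fintype.sum_prod_type]
    refine sum_congr rfl fun x _ => ?_
    rw [Fintype.sum_prod_type_right]
    exact sum_congr rfl fun v _ => hsumY x v
  · dsimp only
    rw [sum_comm, ← h.source]
    simp only [hsumY, margXZ3]
  · dsimp only
    simp only [hsumY, hsumX, reconLaw, margYZ3]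
    ring
  · simpa only [hsumY] using hR
  · simpa only [hsumX] using hR'
  · refine le_of_eq_of_le ?_ hΔ
    rw [← expD3_sourceReconLaw]
    simp only [expD3, sourceReconLaw, sum_mul]
    exact sum_congr rfl fun x _ => sum_congr rfl fun y _ => sum_comm
  · convert hTV using 2
    · funext x
      dsimp only
      rw [← sum_comm_cycle, sum_comm, ← h.source]
      simp only [hsumY, margXZ3]
    · funext y
      dsimp only
      rw [← sum_comm_cycle]
      simp only [hsumX, margX3]

lemma HasSingleLetterScheme.mem_RegionSminus
    (h : HasSingleLetterScheme pXZ D R R' Δ fun x => ∑ z, pXZ (x, z)) (hpXZ : IsPMF pXZ)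
    (hf : Pc < fFun pXZ D Δ) (hPc : 0 ≤ Pc) (hsum : R' ≤ R + R0)
    (hR0 : 0 < R0) :
    (R + γ, R0, Δ, Pc) ∈ RegionSminus pXZ D γ := by
  obtain ⟨U, _, p, V, hscheme, hR, hR', hΔ, hmarg⟩ := h
  refine ⟨U, _, _, hscheme.sminusWitness hpXZ (by linarith) (by linarith) hΔ ?_ hf hR0⟩
  rwa [hmarg, limsupTV_self]

lemma HasSingleLetterScheme.of_sum_abs_sub_le {C η : ℝ} (h : HasSingleLetterScheme pXZ D R R' Δ Q)
    (hpXZ : IsPMF pXZ) (hD : ∀ x y y', D x y' - D x y ≤ C) (hC : 0 ≤ C)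
    (hη : ∑ x, |(∑ z, pXZ (x, z)) - Q x| ≤ η) :
    HasSingleLetterScheme pXZ D R R' (Δ + C * η) fun x => ∑ z, pXZ (x, z) := by
  obtain ⟨U, _, p, V, hscheme, hR, hR', hΔ, rfl⟩ := h
  obtain ⟨K, hK, hmap, hcost⟩ :=
    exists_channel_map_eq hpXZ.sum_right (hscheme.isPMF_reconLaw hpXZ).margX3
  refine ⟨U, _, p, postProcess V K, hscheme.postProcess hK, hR, ?_, ?_, ?_⟩
  · rw [reconLaw_postProcess]
    exact (condMI_mapFst_le hscheme.reconLaw_nonneg fun _ => hK _).trans hR'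
  · exact (hscheme.expDistortion_postProcess_le hK hD).trans
      (add_le_add hΔ (mul_le_mul_of_nonneg_left (hcost.trans hη) hC))
  · funext y
    rw [reconLaw_postProcess, margX3_mapFst, hmap]

end SingleLetter

section CodesAsSchemes

variable {X Z : Type*} [Fintype X] [Fintype Z] {n N N0 : ℕ} {pXZ : X × Z → ℝ}
  {enc : (Fin n → X) → (Fin n → Z) → Fin N0 → Fin N → ℝ}
  {dec : Fin N → (Fin n → Z) → Fin N0 → (Fin n → X) → ℝ}

/-- The law of `(Xⁿ, (K, M), Zⁿ)` for a code with encoder `enc`, where `K` is the common randomness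
and `M` the message; with `codeChannel` it presents the code as a scheme. -/
def codeLaw (pXZ : X × Z → ℝ) (enc : (Fin n → X) → (Fin n → Z) → Fin N0 → Fin N → ℝ) :
    (Fin n → X) × (Fin N0 × Fin N) × (Fin n → Z) → ℝ :=
  fun w => pairProd n pXZ (w.1, w.2.2) * (1 / (N0 : ℝ)) * enc w.1 w.2.2 w.2.1.1 w.2.1.2

/-- The decoder `dec` as a channel from `((K, M), Zⁿ)` to `Yⁿ`. -/
def codeChannel (dec : Fin N → (Fin n → Z) → Fin N0 → (Fin n → X) → ℝ) :
    (Fin N0 × Fin N) × (Fin n → Z) → (Fin n → X) → ℝ :=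
  fun v => dec v.1.2 v.2 v.1.1

lemma codeJoint_eq (pXZ : X × Z → ℝ) (enc : (Fin n → X) → (Fin n → Z) → Fin N0 → Fin N → ℝ)
    (dec : Fin N → (Fin n → Z) → Fin N0 → (Fin n → X) → ℝ) (xs zs k m ys) :
    codeJoint pXZ enc dec (xs, zs, k, m, ys) =
      codeLaw pXZ enc (xs, (k, m), zs) * codeChannel dec ((k, m), zs) ys :=
  rfl

lemma margXZ3_reconLaw_codeLaw (pXZ : X × Z → ℝ)
    (enc : (Fin n → X) → (Fin n → Z) → Fin N0 → Fin N → ℝ)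
    (dec : Fin N → (Fin n → Z) → Fin N0 → (Fin n → X) → ℝ) :
    margXZ3 (reconLaw (codeLaw pXZ enc) (codeChannel dec)) = codeYZ pXZ enc dec := by
  funext v
  simp only [codeYZ, codeJoint_eq, margXZ3, reconLaw, margYZ3, sum_mul, Fintype.sum_prod_type]
  exact sum_comm_cycle

lemma expDistortion_codeLaw (pXZ : X × Z → ℝ)
    (enc : (Fin n → X) → (Fin n → Z) → Fin N0 → Fin N → ℝ)
    (dec : Fin N → (Fin n → Z) → Fin N0 → (Fin n → X) → ℝ) (D : X → X → ℝ) :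
    expDistortion (codeLaw pXZ enc) (codeChannel dec)
      (fun xs ys => 1 / (n : ℝ) * ∑ i, D (xs i) (ys i)) = codeExpDist pXZ enc dec D := by
  simp only [expDistortion, codeExpDist, Fintype.sum_prod_type, codeJoint_eq, mul_sum, mul_assoc]
  refine sum_congr rfl fun xs _ => ?_
  rw [sum_comm_cycle]

lemma codeOutY_eq_sum_codeYZ (pXZ : X × Z → ℝ)
    (enc : (Fin n → X) → (Fin n → Z) → Fin N0 → Fin N → ℝ)
    (dec : Fin N → (Fin n → Z) → Fin N0 → (Fin n → X) → ℝ) (ys : Fin n → X) :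
    codeOutY pXZ enc dec ys = ∑ zs, codeYZ pXZ enc dec (ys, zs) :=
  sum_comm

lemma codeLaw_nonneg (hpXZ : ∀ v, 0 ≤ pXZ v) (henc : ∀ xs zs k, IsPMF (enc xs zs k))
    (w : (Fin n → X) × (Fin N0 × Fin N) × (Fin n → Z)) : 0 ≤ codeLaw pXZ enc w :=
  mul_nonneg (mul_nonneg (pairProd_nonneg hpXZ _) (by positivity)) ((henc _ _ _).1 _)

lemma margXZ3_codeLaw (pXZ : X × Z → ℝ) (henc : ∀ xs zs k, IsPMF (enc xs zs k)) (hN0 : N0 ≠ 0) :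
    margXZ3 (codeLaw pXZ enc) = pairProd n pXZ := by
  funext v
  simp only [margXZ3, codeLaw, Fintype.sum_prod_type, ← mul_sum, (henc _ _ _).2]
  field_simp
  simp

lemma isScheme_codeLaw (hpXZ : ∀ v, 0 ≤ pXZ v) (henc : ∀ xs zs k, IsPMF (enc xs zs k))
    (hdec : ∀ m zs k, IsPMF (dec m zs k)) (hN0 : N0 ≠ 0) :
    IsScheme (pairProd n pXZ) (codeLaw pXZ enc) (codeChannel dec) where
  nonneg := codeLaw_nonneg hpXZ henc
  channel _ := hdec _ _ _
  source := margXZ3_codeLaw pXZ henc hN0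

lemma condMI_codeLaw_le (hpXZ : IsPMF pXZ) (henc : ∀ xs zs k, IsPMF (enc xs zs k))
    (hN0 : N0 ≠ 0) : condMI (codeLaw pXZ enc) ≤ Real.log N := by
  have hpmf : IsPMF (codeLaw pXZ enc) :=
    ⟨codeLaw_nonneg hpXZ.1 henc, by
      rw [← sum_margXZ3, margXZ3_codeLaw pXZ henc hN0, (hpXZ.pairProd n).2]⟩
  have hle : ∀ w, codeLaw pXZ enc w ≤ 1 / (N0 : ℝ) * margXZ3 (codeLaw pXZ enc) (w.1, w.2.2) := by
    intro w
    rw [margXZ3_codeLaw pXZ henc hN0, codeLaw, mul_comm (1 / (N0 : ℝ))]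
    refine mul_le_of_le_one_right (mul_nonneg (pairProd_nonneg hpXZ.1 _) (by positivity)) ?_
    rw [← (henc w.1 w.2.2 w.2.1.1).2]
    exact single_le_sum (fun m _ => (henc w.1 w.2.2 w.2.1.1).1 m) (mem_univ _)
  have hN0' : (N0 : ℝ) ≠ 0 := mod_cast hN0
  simpa [hN0'] using condMI_le_log_mul_card hpmf (by positivity) hle

lemma condMI_reconLaw_codeLaw_le (hpXZ : IsPMF pXZ) (henc : ∀ xs zs k, IsPMF (enc xs zs k))
    (hdec : ∀ m zs k, IsPMF (dec m zs k)) (hN0 : N0 ≠ 0) :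
    condMI (reconLaw (codeLaw pXZ enc) (codeChannel dec)) ≤ Real.log (N * N0) := by
  have hscheme := isScheme_codeLaw hpXZ.1 henc hdec hN0
  have := condMI_le_log_mul_card (hscheme.isPMF_reconLaw (hpXZ.pairProd n)) one_pos fun w => by
    rw [one_mul]
    exact le_margXZ3 hscheme.reconLaw_nonneg w
  simpa [mul_comm] using this

lemma code_sizes_ne_zero (h : IsPMF (codeYZ pXZ enc dec)) : N ≠ 0 ∧ N0 ≠ 0 := by
  constructor <;> rintro rfl <;> simpa [codeYZ] using h.2

end CodesAsSchemes

section SingleLetterization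

variable {X : Type*} {Z : Type} [Fintype X] [Fintype Z] {pXZ r : X × Z → ℝ} {D : X → X → ℝ}

lemma hasSingleLetterScheme_of_code {n N N0 : ℕ}
    {enc : (Fin n → X) → (Fin n → Z) → Fin N0 → Fin N → ℝ}
    {dec : Fin N → (Fin n → Z) → Fin N0 → (Fin n → X) → ℝ} (hpXZ : IsPMF pXZ)
    (henc : ∀ xs zs k, IsPMF (enc xs zs k)) (hdec : ∀ m zs k, IsPMF (dec m zs k)) (hn : n ≠ 0)
    (hN0 : N0 ≠ 0) (hr : IsPMF r) (hYZ : codeYZ pXZ enc dec = pairProd n r) :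
    HasSingleLetterScheme pXZ D (1 / (n : ℝ) * Real.log N) (1 / (n : ℝ) * Real.log (N * N0))
      (codeExpDist pXZ enc dec D) fun y => ∑ z, r (y, z) := by
  have hscheme := isScheme_codeLaw hpXZ.1 henc hdec hN0
  have hrecon : margXZ3 (reconLaw (codeLaw pXZ enc) (codeChannel dec)) = pairProd n r := by
    rw [margXZ3_reconLaw_codeLaw, hYZ]
  refine ⟨Fin n × (Fin N0 × Fin N) × (Fin n → Z), inferInstance, timeShare (codeLaw pXZ enc),
    timeShareChannel (codeChannel dec), hscheme.timeShare hn hpXZ, ?_, ?_, ?_, ?_⟩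
  · exact (condMI_timeShare_le hscheme.nonneg hpXZ hscheme.source).trans
      (mul_le_mul_of_nonneg_left (condMI_codeLaw_le hpXZ henc hN0) (by positivity))
  · rw [reconLaw_timeShare]
    exact (condMI_timeShare_le hscheme.reconLaw_nonneg hr hrecon).trans
      (mul_le_mul_of_nonneg_left (condMI_reconLaw_codeLaw_le hpXZ henc hdec hN0) (by positivity))
  · rw [expDistortion_timeShare, expDistortion_codeLaw]
  · funext y
    rw [reconLaw_timeShare, margX3_eq_sum_margXZ3, margXZ3_timeShare hn hr hrecon]

lemma nonneg_of_floor_two_rpow_ne_zero {a : ℝ} (h : ⌊(2 : ℝ) ^ a⌋₊ ≠ 0) : 0 ≤ a := by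
  by_contra! ha
  exact h (Nat.floor_eq_zero.mpr (Real.rpow_lt_one_of_one_lt_of_neg one_lt_two ha))

-- Codes are sized in powers of two while `condMI` is in nats; `log 2 ≤ 1` absorbs the discrepancy.
lemma log_floor_two_rpow_le {a : ℝ} (h : ⌊(2 : ℝ) ^ a⌋₊ ≠ 0) : Real.log ⌊(2 : ℝ) ^ a⌋₊ ≤ a := by
  calc Real.log ⌊(2 : ℝ) ^ a⌋₊
      ≤ Real.log ((2 : ℝ) ^ a) :=
        Real.log_le_log (by positivity) (Nat.floor_le (by positivity))
    _ = a * Real.log 2 := Real.log_rpow two_pos a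
    _ ≤ a := mul_le_of_le_one_right (nonneg_of_floor_two_rpow_ne_zero h)
        (Real.log_two_lt_d9.le.trans (by norm_num))

variable {R R0 Δ Pc : ℝ}

lemma AchievableStrongIID.eventually_hasSingleLetterScheme
    (h : AchievableStrongIID pXZ D R R0 Δ Pc) (hpXZ : IsPMF pXZ) {ε : ℝ} (hε : 0 < ε) :
    ∀ᶠ n : ℕ in atTop, 0 ≤ R0 + ε ∧ ∃ Q, IsPMF Q ∧
      HasSingleLetterScheme pXZ D (R + ε) (R + ε + (R0 + ε)) (Δ + ε) Q ∧
      dTV (prodDist n fun x => ∑ z, pXZ (x, z)) (prodDist n Q) ≤ Pc + ε := by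
  obtain ⟨n₀, hcodes⟩ := h ε hε
  filter_upwards [eventually_ge_atTop n₀, eventually_gt_atTop 0] with n hn₀ hnpos
  obtain ⟨enc, dec, henc, hdec, hdist, hTV, r, hr, hiid⟩ := hcodes n hn₀
  have hYZ : codeYZ pXZ enc dec = pairProd n r := funext fun v => hiid v.1 v.2
  have hnpos' : (0 : ℝ) < n := mod_cast hnpos
  obtain ⟨hN, hN0⟩ := code_sizes_ne_zero (hYZ ▸ hr.pairProd n)
  have hlogN := log_floor_two_rpow_le hN
  have hlogN0 := log_floor_two_rpow_le hN0
  refine ⟨nonneg_of_mul_nonneg_right (nonneg_of_floor_two_rpow_ne_zero hN0) hnpos',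
    fun x => ∑ z, r (x, z), hr.sum_right,
    (hasSingleLetterScheme_of_code hpXZ henc hdec hnpos.ne' hN0 hr hYZ).mono ?_ ?_ hdist, ?_⟩
  · rw [one_div, inv_mul_le_iff₀ hnpos']
    exact hlogN
  · rw [one_div, inv_mul_le_iff₀ hnpos', Real.log_mul (mod_cast hN) (mod_cast hN0)]
    exact (add_le_add hlogN hlogN0).trans_eq (mul_add _ _ _).symm
  · convert hTV using 2
    funext ys
    rw [codeOutY_eq_sum_codeYZ, hYZ, sum_pairProd_right]

end SingleLetterization

section Converse

variable {X : Type*} {Z : Type} [Fintype X] [Fintype Z] {pXZ : X × Z → ℝ} {D : X → X → ℝ}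
  {R R0 Δ Pc : ℝ}

lemma AchievableStrongIID.hasSingleLetterScheme_source (h : AchievableStrongIID pXZ D R R0 Δ Pc)
    (hpXZ : IsPMF pXZ) {C ε : ℝ} (hD : ∀ x y y', D x y' - D x y ≤ C) (hε : 0 < ε)
    (hPc : Pc + ε < 1) :
    HasSingleLetterScheme pXZ D (R + ε) (R + ε + (R0 + ε)) (Δ + 2 * ε)
      fun x => ∑ z, pXZ (x, z) := by
  have hC : 0 < max C 1 := zero_lt_one.trans_le (le_max_right C 1)
  obtain ⟨n, ⟨-, Q, hQ, hscheme, hTV⟩, hclose⟩ :=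
    ((h.eventually_hasSingleLetterScheme hpXZ hε).and
      (eventually_sum_abs_sub_le_of_dTV_prodDist_le X hPc (div_pos hε hC))).exists
  refine (hscheme.of_sum_abs_sub_le hpXZ (fun x y y' => (hD x y y').trans (le_max_left C 1)) hC.le
    (hclose _ _ hpXZ.sum_right hQ hTV)).mono le_rfl le_rfl ?_
  rw [mul_div_cancel₀ _ hC.ne']
  linarith

lemma AchievableStrongIID.add_mem_region (h : AchievableStrongIID pXZ D R R0 Δ Pc)
    (hpXZ : IsPMF pXZ) {C ε : ℝ} (hD : ∀ x y y', D x y' - D x y ≤ C) (hε : 0 < ε) :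
    (R + 2 * ε, R0 + 2 * ε, Δ + 2 * ε, Pc + 2 * ε) ∈
      RegionSminus pXZ D ε ∪ RegionSplus pXZ D ε := by
  obtain ⟨n, hR0, Q, -, hscheme, hTV⟩ := (h.eventually_hasSingleLetterScheme hpXZ hε).exists
  rw [show R + 2 * ε = R + ε + ε by ring]
  rcases lt_or_ge (Pc + 2 * ε) (fFun pXZ D (Δ + 2 * ε)) with hlt | hge
  · have hPc : Pc + ε < 1 := by linarith [fFun_le_one pXZ D (Δ + 2 * ε)]
    have hPc_nonneg : 0 ≤ Pc + ε := (dTV_nonneg _ _).trans hTV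
    exact .inl ((h.hasSingleLetterScheme_source hpXZ hD hε hPc).mem_RegionSminus hpXZ hlt
      (by linarith) (by linarith) (by linarith))
  · exact .inr ((hscheme.mono le_rfl le_rfl (by linarith)).mem_RegionSplus hpXZ hge (by linarith))

end Converse

/-- **Theorem 2 (converse, strong perception):** if `(R, R₀, Δ, Π)` is achievable with
respect to the strong perceptual constraint by codes whose reconstruction `Y^n` and side
information `Z^n` are jointly i.i.d. sequences, then it lies in the closure of
`R^{(s)} = ⋃_{γ>0} (R_γ^{(s)-} ∪ R_γ^{(s)+})`. -/
theorem converse_strong_perception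
    {X Z : Type} [Fintype X] [Fintype Z]
    (pXZ : X × Z → ℝ) (hpXZ : IsPMF pXZ)
    (D : X → X → ℝ) (dmax : ℝ) (hD : ∀ x y, 0 ≤ D x y ∧ D x y ≤ dmax)
    (R R0 Δ Pc : ℝ)
    (h : AchievableStrongIID pXZ D R R0 Δ Pc) :
    (R, R0, Δ, Pc) ∈
      closure (⋃ γ > (0 : ℝ), RegionSminus pXZ D γ ∪ RegionSplus pXZ D γ) := by
  have hDdiff : ∀ x y y', D x y' - D x y ≤ dmax := fun x y y' => by
    linarith [(hD x y).1, (hD x y').2]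
  have hlim : Tendsto (fun ε : ℝ => (R + 2 * ε, R0 + 2 * ε, Δ + 2 * ε, Pc + 2 * ε))
      (nhdsWithin 0 (Set.Ioi 0)) (nhds (R, R0, Δ, Pc)) := by
    refine tendsto_nhdsWithin_of_tendsto_nhds (Continuous.tendsto' ?_ _ _ ?_)
    · fun_prop
    · simp
  refine mem_closure_of_tendsto hlim ?_
  filter_upwards [self_mem_nhdsWithin] with ε hε
  exact Set.mem_biUnion hε (h.add_mem_region hpXZ hDdiff hε)

end
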